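/- arXiv:1801.05121 — 8 statements merged into one kernel-verified Lean document; each statement's English description precedes it below -/
import Mathlib

section
/- Let Q = (Q_i)_{i≥1} be a generator-stationary random element of S. Then E[Q_1] = nλ, and for every integer i ≥ 2, E[Q_i] = nλ · P(Q_1 = ⋯ = Q_{i−1} = n). -/
open MeasureTheory

/-- Membership in the state space `S`: coordinates are at most `n`, the sequence is
non-increasing, and only finitely many coordinates are non-zero (finite total mass).
Here `q i` represents the paper's `Q_{i+1}`. -/
def InS (n : ℕ) (q : ℕ → ℕ) : Prop :=
  (∀ i, q i ≤ n) ∧ (∀ i, q (i + 1) ≤ q i) ∧ (Function.support q).Finite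

/-- The JSQ generator `G_Q` acting on a test function `f`.  The index `j` corresponds to
the paper's index `i = j + 1`; for `j = 0` the condition `∀ k < 0, q k = n` is vacuous, so
the first summand is the paper's `n λ 1(q_1 < n)(f(q+e^{(1)}) - f(q))` term, and the
summands `j ≥ 1` are the paper's arrival terms for `i ≥ 2`.  The second sum contains the
departure terms. -/
noncomputable def jsqGen (n : ℕ) (lam : ℝ) (f : (ℕ → ℕ) → ℝ) (q : ℕ → ℕ) : ℝ :=
  (∑' j : ℕ, (n * lam) * (if (∀ k < j, q k = n) ∧ q j < n then (1 : ℝ) else 0) *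
      (f (Function.update q j (q j + 1)) - f q)) +
  ∑' j : ℕ, ((q j : ℝ) - (q (j + 1) : ℝ)) * (f (Function.update q j (q j - 1)) - f q)

/-- A random element `Q` of `S` is generator-stationary if for every test function `f`
with `E|f(Q)| < ∞`, the expectation `E[G_Q f(Q)]` is well defined and equals `0`. -/
def GeneratorStationary {Ωp : Type*} [MeasurableSpace Ωp] (μ : Measure Ωp)
    (n : ℕ) (lam : ℝ) (Q : Ωp → ℕ → ℕ) : Prop :=
  ∀ f : (ℕ → ℕ) → ℝ, Integrable (fun ω => f (Q ω)) μ →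
    Integrable (fun ω => jsqGen n lam f (Q ω)) μ ∧
      (∫ ω, jsqGen n lam f (Q ω) ∂μ) = 0

open Classical in
lemma gen_coord (n : ℕ) (lam : ℝ) (q : ℕ → ℕ) (hq : InS n q) (j : ℕ) :
    jsqGen n lam (fun q => (q j : ℝ)) q =
      ((q (j + 1) : ℝ) - n * lam * (if ∀ k < j + 1, q k = n then (1 : ℝ) else 0)) -
      ((q j : ℝ) - n * lam * (if ∀ k < j, q k = n then (1 : ℝ) else 0)) := by
  obtain ⟨h1, h2, -⟩ := hq
  unfold jsqGen
  rw [tsum_eq_single j, tsum_eq_single j]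
  · simp only [Function.update_self]
    have hd : ((q j : ℝ) - (q (j + 1) : ℝ)) * (((q j - 1 : ℕ) : ℝ) - (q j : ℝ))
        = (q (j + 1) : ℝ) - q j := by
      rcases Nat.eq_zero_or_pos (q j) with h | h
      · have : q (j + 1) = 0 := by have := h2 j; omega
        simp [h, this]
      · rw [Nat.cast_sub h]; push_cast; ring
    rw [hd]
    have hs : (∀ k < j + 1, q k = n) ↔ (∀ k < j, q k = n) ∧ q j = n :=
      Nat.forall_lt_succ_right
    have hle := h1 j
    by_cases ha : ∀ k < j, q k = n
    · by_cases hb : q j = n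
      · have hs' := hs.2 ⟨ha, hb⟩
        rw [if_pos hs', if_pos ha, if_neg (by omega)]
        ring
      · have hs' : ¬ ∀ k < j + 1, q k = n := fun h => hb (hs.1 h).2
        rw [if_neg hs', if_pos ha, if_pos ⟨ha, by omega⟩]
        push_cast; ring
    · have hs' : ¬ ∀ k < j + 1, q k = n := fun h => ha (hs.1 h).1
      rw [if_neg hs', if_neg ha, if_neg (fun h => ha h.1)]
      ring
  · intro i hi
    simp [Function.update_of_ne hi.symm]
  · intro i hi
    simp [Function.update_of_ne hi.symm]

/-- for a generator-stationary `Q`, `E[Q_1] = n λ` and, for every `i ≥ 2`,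
`E[Q_i] = n λ · P(Q_1 = ⋯ = Q_{i-1} = n)`.  With the `0`-indexed `Q` used here
(`Q ω j` is the paper's `Q_{j+1}`), this reads: `E[Q ω 0] = n λ` and for every `j ≥ 1`,
`E[Q ω j] = n λ · P(∀ k < j, Q ω k = n)`. -/
theorem stmt0 {Ωp : Type*} [MeasurableSpace Ωp] (μ : Measure Ωp)
    [IsProbabilityMeasure μ] (n : ℕ) (hn : 1 ≤ n) (lam : ℝ) (hlam : 0 < lam)
    (Q : Ωp → ℕ → ℕ) (hQmeas : Measurable Q) (hQS : ∀ ω, InS n (Q ω))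
    (hstat : GeneratorStationary μ n lam Q) :
    (∫ ω, (Q ω 0 : ℝ) ∂μ) = n * lam ∧
      ∀ j : ℕ, 1 ≤ j →
        (∫ ω, (Q ω j : ℝ) ∂μ) =
          n * lam * (μ {ω | ∀ k < j, Q ω k = n}).toReal := by
  classical
  have hm : ∀ j, Measurable (fun ω => Q ω j) := fun j => (measurable_pi_apply j).comp hQmeas
  have hset : ∀ j, MeasurableSet {ω | ∀ k < j, Q ω k = n} := by
    intro j
    have : {ω | ∀ k < j, Q ω k = n} = ⋂ k, ⋂ (_ : k < j), (fun ω => Q ω k) ⁻¹' {n} := by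
      ext ω; simp
    rw [this]
    exact MeasurableSet.iInter fun k => MeasurableSet.iInter fun _ =>
      hm k (measurableSet_singleton n)
  let I : ℕ → Ωp → ℝ := fun j ω => if ∀ k < j, Q ω k = n then (1 : ℝ) else 0
  have hIm : ∀ j, Measurable (I j) := fun j =>
    Measurable.ite (hset j) measurable_const measurable_const
  have hQr : ∀ j, Measurable (fun ω => (Q ω j : ℝ)) := fun j =>
    measurable_from_top.comp (hm j)
  have hQi : ∀ j, Integrable (fun ω => (Q ω j : ℝ)) μ := by
    intro j
    refine Integrable.of_bound (hQr j).aestronglyMeasurable (n : ℝ) ?_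
    refine Filter.Eventually.of_forall fun ω => ?_
    simpa using (hQS ω).1 j
  have hIb : ∀ j ω, ‖I j ω‖ ≤ 1 := by
    intro j ω
    simp only [I]
    split_ifs <;> simp
  have hIi : ∀ j, Integrable (I j) μ := fun j =>
    Integrable.of_bound (hIm j).aestronglyMeasurable 1 (Filter.Eventually.of_forall (hIb j))
  let F : ℕ → Ωp → ℝ := fun j ω => (Q ω j : ℝ) - n * lam * I j ω
  have hFi : ∀ j, Integrable (F j) μ := fun j => (hQi j).sub ((hIi j).const_mul _)
  have hstep : ∀ j, ∫ ω, F (j + 1) ω ∂μ = ∫ ω, F j ω ∂μ := by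
    intro j
    have h := (hstat (fun q => (q j : ℝ)) (hQi j)).2
    have he : (fun ω => jsqGen n lam (fun q => (q j : ℝ)) (Q ω))
        = fun ω => F (j + 1) ω - F j ω := by
      funext ω
      rw [gen_coord n lam (Q ω) (hQS ω) j]
    rw [he, integral_sub (hFi _) (hFi _)] at h
    linarith
  have hconst : ∀ j, ∫ ω, F j ω ∂μ = ∫ ω, F 0 ω ∂μ := by
    intro j
    induction j with
    | zero => rfl
    | succ k ih => rw [hstep, ih]
  have hlim : Filter.Tendsto (fun j => ∫ ω, F j ω ∂μ) Filter.atTop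
      (nhds (∫ _, (0 : ℝ) ∂μ)) := by
    refine tendsto_integral_of_dominated_convergence (fun _ => (n : ℝ) + n * lam)
      (fun j => (hFi j).aestronglyMeasurable) (integrable_const _) ?_ ?_
    · intro j
      refine Filter.Eventually.of_forall fun ω => ?_
      refine (norm_sub_le _ _).trans (add_le_add ?_ ?_)
      · simpa using (hQS ω).1 j
      · rw [norm_mul, Real.norm_of_nonneg (by positivity : (0 : ℝ) ≤ n * lam)]
        exact mul_le_of_le_one_right (by positivity) (hIb j ω)
    · refine Filter.Eventually.of_forall fun ω => ?_
      obtain ⟨B, hB⟩ := (hQS ω).2.2.bddAbove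
      have hz : ∀ k, B < k → Q ω k = 0 := by
        intro k hk
        by_contra hne
        exact absurd (hB (Function.mem_support.2 hne)) (by omega)
      refine tendsto_const_nhds.congr' ?_
      filter_upwards [Filter.eventually_ge_atTop (B + 2)] with j hj
      have hno : ¬ ∀ k < j, Q ω k = n := by
        intro h
        have h1 := h (B + 1) (by omega)
        rw [hz (B + 1) (by omega)] at h1
        omega
      simp only [F, I]
      rw [if_neg hno, hz j (by omega)]
      simp
  have hzero : ∀ j, ∫ ω, F j ω ∂μ = 0 := by
    have h0 : ∫ ω, F 0 ω ∂μ = 0 := by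
      simp only [hconst, integral_zero] at hlim
      exact tendsto_nhds_unique tendsto_const_nhds hlim
    intro j
    rw [hconst, h0]
  have hmain : ∀ j, (∫ ω, (Q ω j : ℝ) ∂μ) =
      n * lam * (μ {ω | ∀ k < j, Q ω k = n}).toReal := by
    intro j
    have h := hzero j
    have hI : ∫ ω, I j ω ∂μ = (μ {ω | ∀ k < j, Q ω k = n}).toReal := by
      have : I j = Set.indicator {ω | ∀ k < j, Q ω k = n} 1 := by
        funext ω
        simp [I, Set.indicator_apply]
      rw [this, integral_indicator_one (hset j)]
      rfl
    simp only [F] at h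
    rw [integral_sub (hQi j) ((hIi j).const_mul _), integral_const_mul, hI] at h
    linarith
  refine ⟨?_, fun j _ => hmain j⟩
  have h := hmain 0
  simpa using h
end

section
/- Let Q be a generator-stationary random element of S and set X_2 = Q_2/n. Then for every κ > β: E[(X_2 − κ/√n)·1(X_2 ≥ κ/√n)] ≤ (1/(β√n))·(12 + 6κ/(κ − β))·P(X_2 ≥ κ/√n − 1/n), and consequently E[√n·X_2] ≤ 2κ + (1/β)·(12 + 6κ/(κ − β)). -/
open MeasureTheory

lemma jsqGen_finite (n : ℕ) (lam : ℝ) (f : (ℕ → ℕ) → ℝ) (q : ℕ → ℕ) (m : ℕ)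
    (h : ∀ j, m ≤ j → ∀ y, f (Function.update q j y) = f q) :
    jsqGen n lam f q =
      (∑ j ∈ Finset.range m, (n * lam) * (if (∀ k < j, q k = n) ∧ q j < n then (1 : ℝ) else 0) *
      (f (Function.update q j (q j + 1)) - f q)) +
      ∑ j ∈ Finset.range m,
        ((q j : ℝ) - (q (j + 1) : ℝ)) * (f (Function.update q j (q j - 1)) - f q) := by
  unfold jsqGen
  congr 1
  · apply tsum_eq_sum
    intro j hj
    rw [h j (by simpa using hj)]; simp
  · apply tsum_eq_sum
    intro j hj
    rw [h j (by simpa using hj)]; simp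

noncomputable def tailSum (m : ℕ) (q : ℕ → ℕ) : ℝ := ∑ i ∈ Finset.range m, (q (i + 2) : ℝ)

lemma tailSum_update (m : ℕ) (q : ℕ → ℕ) (l : ℕ) (hl : l < m) (y : ℕ) :
    tailSum m (Function.update q (l + 2) y) - tailSum m q = (y : ℝ) - q (l + 2) := by
  unfold tailSum
  rw [← Finset.sum_sub_distrib, Finset.sum_eq_single l]
  · simp
  · intro b _ hb
    rw [Function.update_of_ne (by omega)]; simp
  · intro h; simp at h; omega

lemma tailSum_update' (m : ℕ) (q : ℕ → ℕ) (j : ℕ) (hj : j < 2 ∨ m + 2 ≤ j) (y : ℕ) :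
    tailSum m (Function.update q j y) = tailSum m q := by
  unfold tailSum
  apply Finset.sum_congr rfl
  intro i hi
  rw [Finset.mem_range] at hi
  rw [Function.update_of_ne (by omega)]

lemma gen_tailSum (n : ℕ) (lam : ℝ) (hlam : 0 ≤ lam) (q : ℕ → ℕ) (hq : InS n q) (m : ℕ) :
    jsqGen n lam (tailSum m) q ≤
      (n * lam) * (if q 0 = n ∧ q 1 = n then (1 : ℝ) else 0) - q 2 + q (m + 2) := by
  rw [jsqGen_finite n lam _ q (m + 2) (fun j hj y => tailSum_update' m q j (Or.inr hj) y)]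
  rw [Finset.sum_range_succ', Finset.sum_range_succ', Finset.sum_range_succ',
    Finset.sum_range_succ']
  simp only [zero_add, tailSum_update' m q 0 (Or.inl (by norm_num)),
    tailSum_update' m q 1 (Or.inl (by norm_num)), sub_self, mul_zero, add_zero]
  have h1 : ∑ l ∈ Finset.range m, (n * lam) *
      (if (∀ k < l + 1 + 1, q k = n) ∧ q (l + 1 + 1) < n then (1 : ℝ) else 0) *
      (tailSum m (Function.update q (l + 1 + 1) (q (l + 1 + 1) + 1)) - tailSum m q)
      = (n * lam) * ∑ l ∈ Finset.range m,
        (if (∀ k < l + 2, q k = n) ∧ q (l + 2) < n then (1 : ℝ) else 0) := by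
    rw [Finset.mul_sum]
    apply Finset.sum_congr rfl
    intro l hl
    rw [tailSum_update m q l (Finset.mem_range.1 hl)]
    push_cast; ring
  have h2 : ∑ l ∈ Finset.range m, ((q (l + 1 + 1) : ℝ) - (q (l + 1 + 1 + 1) : ℝ)) *
      (tailSum m (Function.update q (l + 1 + 1) (q (l + 1 + 1) - 1)) - tailSum m q)
      = ∑ l ∈ Finset.range m, ((q (l + 1 + 2) : ℝ) - (q (l + 2) : ℝ)) := by
    apply Finset.sum_congr rfl
    intro l hl
    rw [tailSum_update m q l (Finset.mem_range.1 hl)]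
    have hmono := hq.2.1 (l + 2)
    rcases Nat.eq_zero_or_pos (q (l + 2)) with h0 | h0
    · have h3 : q (l + 2 + 1) = 0 := by omega
      have h4 : q (l + 1 + 2) = 0 := h3
      simp [h0, h3]
    · rw [Nat.cast_sub h0]
      push_cast
      have h4 : q (l + 1 + 2) = q (l + 2 + 1) := rfl
      rw [h4]; ring
  rw [h1, h2, Finset.sum_range_sub (fun l => (q (l + 2) : ℝ))]
  have h3 : ∑ l ∈ Finset.range m,
        (if (∀ k < l + 2, q k = n) ∧ q (l + 2) < n then (1 : ℝ) else 0) ≤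
        (if q 0 = n ∧ q 1 = n then (1 : ℝ) else 0) := by
    split_ifs with hc
    · rw [Finset.sum_boole]
      norm_cast
      rw [Finset.card_le_one]
      intro i hi j hj
      simp only [Finset.mem_filter] at hi hj
      rcases lt_trichotomy i j with h | h | h
      · have := hj.2.1 (i + 2) (by omega); omega
      · exact h
      · have := hi.2.1 (j + 2) (by omega); omega
    · apply le_of_eq
      apply Finset.sum_eq_zero
      intro l _
      rw [if_neg]
      rintro ⟨h, _⟩
      exact hc ⟨h 0 (by omega), h 1 (by omega)⟩
  have h4 : (0 : ℝ) ≤ n * lam := by positivity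
  have h5 := mul_le_mul_of_nonneg_left h3 h4
  simp only [zero_add]
  linarith

noncomputable def vv (K : ℝ) (b : ℕ) : ℝ := max ((b : ℝ) - K) 0
noncomputable def uu (K : ℝ) (b : ℕ) : ℝ := ∑ i ∈ Finset.range (b + 1), vv K i
noncomputable def ww (K : ℝ) (b : ℕ) : ℝ := if K < b then 1 else 0
noncomputable def HH (n : ℕ) (K A : ℝ) (q0 q1 : ℕ) : ℝ :=
  uu K q1 - ((n : ℝ) - q0) * vv K q1 + A * ((n : ℝ) - q0) ^ 2 * ww K q1

lemma gen_HH_eq (n : ℕ) (lam K A : ℝ) (q : ℕ → ℕ) :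
    jsqGen n lam (fun q => HH n K A (q 0) (q 1)) q =
      (n * lam) * (if q 0 < n then (1 : ℝ) else 0) *
          (HH n K A (q 0 + 1) (q 1) - HH n K A (q 0) (q 1)) +
      (n * lam) * (if q 0 = n ∧ q 1 < n then (1 : ℝ) else 0) *
          (HH n K A (q 0) (q 1 + 1) - HH n K A (q 0) (q 1)) +
      ((q 0 : ℝ) - q 1) * (HH n K A (q 0 - 1) (q 1) - HH n K A (q 0) (q 1)) +
      ((q 1 : ℝ) - q 2) * (HH n K A (q 0) (q 1 - 1) - HH n K A (q 0) (q 1)) := by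
  rw [jsqGen_finite n lam _ q 2]
  · simp [Finset.sum_range_succ]
    ring
  · intro j hj y
    rw [Function.update_of_ne (by omega), Function.update_of_ne (by omega)]

lemma uu_succ (K : ℝ) (b : ℕ) : uu K (b + 1) = uu K b + vv K (b + 1) := by
  unfold uu
  rw [Finset.sum_range_succ _ (b + 1)]

lemma gen_HH_le (n : ℕ) (lam del K : ℝ) (hal : (n : ℝ) * lam = n - del) (hdel : 0 < del)
    (hdn : del < n) (hK : del < K) (q : ℕ → ℕ) (hq : InS n q) :
    jsqGen n lam (fun q => HH n K ((1 + K / (K - del)) / 2) (q 0) (q 1)) q ≤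
      - del * vv K (q 1) + n * (2 + K / (K - del)) * (if K - 1 ≤ (q 1 : ℝ) then 1 else 0)
        + vv K (n + 1) * (q 2 - (n - del) * (if q 0 = n ∧ q 1 = n then (1 : ℝ) else 0)) := by
  rw [gen_HH_eq, hal]
  obtain ⟨hqn, hmono, -⟩ := hq
  have h0n := hqn 0
  have h1n := hqn 1
  have h10 := hmono 0
  have h21 := hmono 1
  simp only [zero_add, Nat.reduceAdd] at h10 h21
  generalize q 0 = x at *
  generalize q 1 = b at *
  generalize q 2 = c at *
  set R := K / (K - del) with hR
  have hKd : 0 < K - del := by linarith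
  have hR1 : 1 ≤ R := by rw [hR, le_div_iff₀ hKd]; linarith
  have hRm : R * (K - del) = K := by rw [hR]; field_simp
  clear_value R
  have hbnR : (b : ℝ) ≤ n := by exact_mod_cast h1n
  have hxnR : (x : ℝ) ≤ n := by exact_mod_cast h0n
  have hbxR : (b : ℝ) ≤ x := by exact_mod_cast h10
  have hcbR : (c : ℝ) ≤ b := by exact_mod_cast h21
  have hc0 : (0 : ℝ) ≤ c := by positivity
  have hn0 : (0 : ℝ) < n := by linarith
  have hM0 : 0 ≤ vv K (n + 1) := le_max_right _ _
  by_cases hbK : (b : ℝ) ≤ K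
  · -- low region
    have hvb : vv K b = 0 := max_eq_right (by linarith)
    have hvm : vv K (b - 1) = 0 := by
      apply max_eq_right
      have : ((b - 1 : ℕ) : ℝ) ≤ b := by exact_mod_cast Nat.sub_le b 1
      linarith
    have hwb : ww K b = 0 := if_neg (by linarith)
    have hwm : ww K (b - 1) = 0 := by
      apply if_neg
      have : ((b - 1 : ℕ) : ℝ) ≤ b := by exact_mod_cast Nat.sub_le b 1
      linarith
    have hum : uu K (b - 1) = uu K b := by
      rcases b with _ | b
      · rfl
      · rw [uu_succ, hvb]; simp
    have hI : vv K (b + 1) ≤ (if K - 1 ≤ (b : ℝ) then 1 else 0) := by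
      unfold vv
      push_cast
      split_ifs with h
      · exact max_le (by linarith) (by norm_num)
      · exact max_le (by linarith) le_rfl
    have hv1 : 0 ≤ vv K (b + 1) := le_max_right _ _
    have hMc : 0 ≤ vv K (n + 1) * c := mul_nonneg hM0 hc0
    set I := (if K - 1 ≤ (b : ℝ) then (1 : ℝ) else 0) with hIdef
    have hI0 : 0 ≤ I := le_trans hv1 hI
    have e1 : HH n K ((1 + R) / 2) (x + 1) b - HH n K ((1 + R) / 2) x b = 0 := by
      simp [HH, hvb, hwb]
    have e2 : HH n K ((1 + R) / 2) (x - 1) b - HH n K ((1 + R) / 2) x b = 0 := by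
      simp [HH, hvb, hwb]
    have e3 : HH n K ((1 + R) / 2) x (b - 1) - HH n K ((1 + R) / 2) x b = 0 := by
      simp [HH, hvb, hwb, hvm, hwm, hum]
    rw [e1, e2, e3, hvb]
    have hnI : (n - del) * vv K (b + 1) ≤ n * (2 + R) * I := by
      calc (n - del) * vv K (b + 1) ≤ n * I := by
            apply mul_le_mul <;> linarith
        _ ≤ n * (2 + R) * I := by
            apply mul_le_mul_of_nonneg_right _ hI0
            nlinarith
    have hnI0 : 0 ≤ n * (2 + R) * I := by positivity
    by_cases hx : x = n
    · subst hx
      have e4 : HH x K ((1 + R) / 2) x (b + 1) - HH x K ((1 + R) / 2) x b = vv K (b + 1) := by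
        simp [HH, uu_succ]
      rw [e4]
      by_cases hb : b = x
      · subst hb
        simp only [lt_irrefl, and_false, and_self, if_true, if_false]
        linarith
      · have : b < x := by omega
        simp only [hb, this, and_true, and_false, if_true, if_false]
        linarith
    · simp only [hx, false_and, if_false]
      linarith
  · push Not at hbK
    have hvb : vv K b = b - K := max_eq_left (by linarith)
    have hv1 : vv K (b + 1) = b - K + 1 := by
      unfold vv; push_cast; rw [max_eq_left (by linarith)]; ring
    have hvn : (b : ℝ) - K + 1 ≤ vv K (n + 1) := by
      refine le_trans ?_ (le_max_left _ _); push_cast; linarith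
    have hwb : ww K b = 1 := if_pos hbK
    have hb1 : 1 ≤ b := by
      have : (0 : ℝ) < b := by linarith
      exact_mod_cast this
    have hx1 : 1 ≤ x := by omega
    have hu : uu K b = uu K (b - 1) + vv K b := by
      conv_lhs => rw [show b = (b - 1) + 1 by omega, uu_succ]
      rw [show (b - 1) + 1 = b by omega]
    have hvm : (b : ℝ) - K - 1 ≤ vv K (b - 1) := by
      refine le_trans ?_ (le_max_left _ _)
      rw [Nat.cast_sub hb1]; push_cast; linarith
    have hwm : ww K (b - 1) ≤ 1 := by unfold ww; split_ifs <;> norm_num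
    have hI : (if K - 1 ≤ (b : ℝ) then (1 : ℝ) else 0) = 1 := if_pos (by linarith)
    rw [hI, hvb]
    have ha0 : 0 ≤ (n : ℝ) - x := by linarith
    have e2 : HH n K ((1 + R) / 2) (x - 1) b - HH n K ((1 + R) / 2) x b
        = -(b - K) + (1 + R) / 2 * (2 * (n - x) + 1) := by
      simp only [HH, hvb, hwb, Nat.cast_sub hx1]; push_cast; ring
    have e3 : HH n K ((1 + R) / 2) x (b - 1) - HH n K ((1 + R) / 2) x b
        ≤ -(b - K) + (n - x) := by
      simp only [HH, hu, hvb, hwb]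
      have t1 : ((n : ℝ) - x) * (b - K - 1) ≤ (n - x) * vv K (b - 1) :=
        mul_le_mul_of_nonneg_left hvm ha0
      have t2 : (1 + R) / 2 * ((n : ℝ) - x) ^ 2 * ww K (b - 1) ≤
          (1 + R) / 2 * ((n : ℝ) - x) ^ 2 * 1 :=
        mul_le_mul_of_nonneg_left hwm (by positivity)
      linarith
    have e3' := mul_le_mul_of_nonneg_left e3 (sub_nonneg.2 hcbR)
    rw [e2]
    have hMc : (c : ℝ) * (b - K) ≤ vv K (n + 1) * c := by nlinarith
    by_cases hx : x = n
    · subst hx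
      have e4 : HH x K ((1 + R) / 2) x (b + 1) - HH x K ((1 + R) / 2) x b = b - K + 1 := by
        simp [HH, uu_succ, hv1]
      rw [e4]
      have hAb : ((x : ℝ) - b) * ((1 + R) / 2) ≤ x * (1 + R) := by nlinarith
      by_cases hb : b = x
      · subst hb
        simp only [lt_irrefl, and_false, and_self, if_true, if_false]
        rw [hv1] at hMc ⊢
        have hbR : 0 ≤ (b : ℝ) * R := by positivity
        linarith
      · have : b < x := by omega
        simp only [hb, this, and_true, and_false, lt_irrefl, if_true, if_false]
        have hbR : 0 ≤ (x : ℝ) * R := by positivity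
        linarith
    · have hxlt : x < n := by omega
      have e1 : HH n K ((1 + R) / 2) (x + 1) b - HH n K ((1 + R) / 2) x b
          = (b - K) + (1 + R) / 2 * (1 - 2 * (n - x)) := by
        simp only [HH, hvb, hwb]; push_cast; ring
      rw [e1]
      simp only [hx, hxlt, false_and, if_true, if_false]
      obtain ⟨a, ha⟩ : ∃ a : ℝ, a = n - x := ⟨_, rfl⟩
      have hxa : (x : ℝ) = n - a := by linarith
      rw [← ha] at ha0
      rw [hxa] at e3' ⊢
      have k1 : a * (b - K) ≤ a * (b - del) := mul_le_mul_of_nonneg_left (by linarith) ha0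
      have k2' : (b : ℝ) ≤ R * (b - del) := by
        have := mul_le_mul_of_nonneg_right hR1 (show (0 : ℝ) ≤ b - K by linarith)
        linarith
      have k2 : a * b ≤ a * (R * (b - del)) := mul_le_mul_of_nonneg_left k2' ha0
      have k3 : (1 + R) / 2 * ((n - del) * (1 - 2 * a) + (n - a - b) * (2 * a + 1)) ≤
          (1 + R) / 2 * (2 * n - 2 * (a * (b - del))) := by
        apply mul_le_mul_of_nonneg_left _ (by linarith)
        linarith [mul_self_nonneg a, (Nat.cast_nonneg b : (0 : ℝ) ≤ b)]
      have k4 : 0 ≤ (c : ℝ) * a := mul_nonneg hc0 ha0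
      linarith

lemma tail_mean {Ωp : Type*} [MeasurableSpace Ωp] (μ : Measure Ωp)
    [IsProbabilityMeasure μ] (n : ℕ) (lam : ℝ) (hlam : 0 ≤ lam)
    (Q : Ωp → ℕ → ℕ) (hQmeas : Measurable Q) (hQS : ∀ ω, InS n (Q ω))
    (hstat : GeneratorStationary μ n lam Q) :
    0 ≤ ∫ ω, ((n * lam) * (if Q ω 0 = n ∧ Q ω 1 = n then (1 : ℝ) else 0) - Q ω 2) ∂μ := by
  have hmi : ∀ i, Measurable (fun ω => Q ω i) := fun i => (measurable_pi_apply i).comp hQmeas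
  have hmr : ∀ i, Measurable (fun ω => (Q ω i : ℝ)) := fun i =>
    (measurable_from_nat (f := fun k : ℕ => (k : ℝ))).comp (hmi i)
  have hint : ∀ i, Integrable (fun ω => (Q ω i : ℝ)) μ := fun i => by
    apply Integrable.of_bound (hmr i).aestronglyMeasurable (n : ℝ)
    filter_upwards with ω
    simpa using (hQS ω).1 i
  have hind : Integrable (fun ω => (n * lam) *
      (if Q ω 0 = n ∧ Q ω 1 = n then (1 : ℝ) else 0)) μ := by
    apply Integrable.const_mul
    apply Integrable.of_bound _ 1
    · filter_upwards with ω
      split_ifs <;> simp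
    · apply Measurable.aestronglyMeasurable
      apply Measurable.ite _ measurable_const measurable_const
      exact ((hmi 0) (measurableSet_singleton n)).inter ((hmi 1) (measurableSet_singleton n))
  have hlim : Filter.Tendsto (fun m : ℕ => ∫ ω, (Q ω (m + 2) : ℝ) ∂μ) Filter.atTop
      (nhds (∫ _ω, (0 : ℝ) ∂μ)) := by
    apply tendsto_integral_of_dominated_convergence (fun _ => (n : ℝ))
    · exact fun m => (hmr _).aestronglyMeasurable
    · exact integrable_const _
    · intro m
      filter_upwards with ω
      simpa using (hQS ω).1 (m + 2)
    · filter_upwards with ω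
      obtain ⟨B, hB⟩ := (hQS ω).2.2.bddAbove
      apply tendsto_const_nhds.congr'
      filter_upwards [Filter.eventually_gt_atTop B] with m hm
      by_contra hne
      have : m + 2 ∈ Function.support (Q ω) := by
        simp only [Function.mem_support]
        intro h0
        apply hne; rw [h0]; simp
      have := hB this
      omega
  simp only [integral_zero] at hlim
  have hm : ∀ m : ℕ, 0 ≤ (∫ ω, ((n * lam) *
      (if Q ω 0 = n ∧ Q ω 1 = n then (1 : ℝ) else 0) - Q ω 2) ∂μ) + ∫ ω, (Q ω (m + 2) : ℝ) ∂μ := by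
    intro m
    obtain ⟨hi, h0⟩ := hstat (tailSum m) (by
      unfold tailSum
      exact integrable_finsetSum _ (fun i _ => hint (i + 2)))
    have hsub : Integrable (fun ω => (n * lam) *
      (if Q ω 0 = n ∧ Q ω 1 = n then (1 : ℝ) else 0) - Q ω 2) μ := hind.sub (hint 2)
    rw [← integral_add hsub (hint _)]
    refine h0.symm.le.trans ?_
    exact integral_mono hi (hsub.add (hint _))
      (fun ω => gen_tailSum n lam hlam (Q ω) (hQS ω) m)
  have := ge_of_tendsto (hlim.const_add (∫ ω, ((n * lam) *
      (if Q ω 0 = n ∧ Q ω 1 = n then (1 : ℝ) else 0) - Q ω 2) ∂μ))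
      (Filter.Eventually.of_forall hm)
  simpa using this

lemma integrable_nat2 {Ωp : Type*} [MeasurableSpace Ωp] (μ : Measure Ωp)
    [IsProbabilityMeasure μ] (n : ℕ) (Q : Ωp → ℕ → ℕ) (hQmeas : Measurable Q)
    (hQS : ∀ ω, InS n (Q ω)) (F : ℕ → ℕ → ℝ) :
    Integrable (fun ω => F (Q ω 0) (Q ω 1)) μ := by
  have hmi : ∀ i, Measurable (fun ω => Q ω i) := fun i => (measurable_pi_apply i).comp hQmeas
  apply Integrable.of_bound
    (C := ∑ i ∈ Finset.range (n + 1), ∑ j ∈ Finset.range (n + 1), ‖F i j‖)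
  · apply Measurable.aestronglyMeasurable
    exact (Measurable.of_discrete (f := fun p : ℕ × ℕ => F p.1 p.2)).comp
      ((hmi 0).prodMk (hmi 1))
  · filter_upwards with ω
    have h0 := (hQS ω).1 0
    have h1 := (hQS ω).1 1
    calc ‖F (Q ω 0) (Q ω 1)‖ ≤ ∑ j ∈ Finset.range (n + 1), ‖F (Q ω 0) j‖ :=
          Finset.single_le_sum (f := fun j => ‖F (Q ω 0) j‖) (fun _ _ => norm_nonneg _)
            (Finset.mem_range.2 (by omega))
      _ ≤ _ := Finset.single_le_sum
            (f := fun i => ∑ j ∈ Finset.range (n + 1), ‖F i j‖)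
            (fun _ _ => Finset.sum_nonneg (fun _ _ => norm_nonneg _))
            (Finset.mem_range.2 (by omega))

lemma key {Ωp : Type*} [MeasurableSpace Ωp] (μ : Measure Ωp)
    [IsProbabilityMeasure μ] (n : ℕ) (lam del K : ℝ) (hal : (n : ℝ) * lam = n - del)
    (hlam : 0 ≤ lam) (hdel : 0 < del) (hdn : del < n) (hK : del < K)
    (Q : Ωp → ℕ → ℕ) (hQmeas : Measurable Q) (hQS : ∀ ω, InS n (Q ω))
    (hstat : GeneratorStationary μ n lam Q) :
    del * ∫ ω, vv K (Q ω 1) ∂μ ≤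
      n * (2 + K / (K - del)) * (μ {ω | K - 1 ≤ (Q ω 1 : ℝ)}).toReal := by
  have hmi : ∀ i, Measurable (fun ω => Q ω i) := fun i => (measurable_pi_apply i).comp hQmeas
  have hset : MeasurableSet {ω | K - 1 ≤ (Q ω 1 : ℝ)} :=
    (hmi 1) (MeasurableSet.of_discrete (s := {k : ℕ | K - 1 ≤ (k : ℝ)}))
  have hv : Integrable (fun ω => vv K (Q ω 1)) μ :=
    integrable_nat2 μ n Q hQmeas hQS (fun _ b => vv K b)
  have hI : Integrable (fun ω => if K - 1 ≤ (Q ω 1 : ℝ) then (1 : ℝ) else 0) μ :=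
    integrable_nat2 μ n Q hQmeas hQS (fun _ b => if K - 1 ≤ (b : ℝ) then (1 : ℝ) else 0)
  have hE : Integrable (fun ω => if Q ω 0 = n ∧ Q ω 1 = n then (1 : ℝ) else 0) μ :=
    integrable_nat2 μ n Q hQmeas hQS (fun x b => if x = n ∧ b = n then (1 : ℝ) else 0)
  have h2 : Integrable (fun ω => (Q ω 2 : ℝ)) μ := by
    apply Integrable.of_bound ((measurable_from_nat
      (f := fun k : ℕ => (k : ℝ))).comp (hmi 2)).aestronglyMeasurable (n : ℝ)
    filter_upwards with ω
    simpa using (hQS ω).1 2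
  have hT : Integrable (fun ω => (Q ω 2 : ℝ) -
      (n - del) * (if Q ω 0 = n ∧ Q ω 1 = n then (1 : ℝ) else 0)) μ := h2.sub (hE.const_mul _)
  have htm := tail_mean μ n lam hlam Q hQmeas hQS hstat
  rw [hal] at htm
  have htm' : ∫ ω, ((Q ω 2 : ℝ) -
      (n - del) * (if Q ω 0 = n ∧ Q ω 1 = n then (1 : ℝ) else 0)) ∂μ ≤ 0 := by
    rw [← neg_nonneg, ← integral_neg]
    simpa only [neg_sub] using htm
  obtain ⟨hi, h0⟩ := hstat (fun q => HH n K ((1 + K / (K - del)) / 2) (q 0) (q 1))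
    (integrable_nat2 μ n Q hQmeas hQS _)
  have hle := integral_mono hi (((hv.const_mul (-del)).add
    (hI.const_mul (n * (2 + K / (K - del))))).add (hT.const_mul (vv K (n + 1))))
    (fun ω => gen_HH_le n lam del K hal hdel hdn hK (Q ω) (hQS ω))
  rw [h0, integral_add' ((hv.const_mul (-del)).add
    (hI.const_mul (n * (2 + K / (K - del))))) (hT.const_mul (vv K (n + 1))),
    integral_add' (hv.const_mul (-del)) (hI.const_mul (n * (2 + K / (K - del)))),
    integral_const_mul, integral_const_mul, integral_const_mul] at hle
  have hIe : ∫ ω, (if K - 1 ≤ (Q ω 1 : ℝ) then (1 : ℝ) else 0) ∂μ =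
      (μ {ω | K - 1 ≤ (Q ω 1 : ℝ)}).toReal := by
    have := integral_indicator_one (μ := μ) hset
    simp only [Set.indicator, Pi.one_apply, Set.mem_ofPred_eq] at this
    exact this
  rw [hIe] at hle
  have hM0 : 0 ≤ vv K (n + 1) := le_max_right _ _
  have := mul_nonpos_of_nonneg_of_nonpos hM0 htm'
  linarith

/-- in the Halfin-Whitt regime `λ = 1 - β/√n`, for a generator-stationary
`Q` and `X₂ = Q₂/n` (here `Q ω 1` is the paper's `Q₂`), for every `κ > β`:
`E[(X₂ - κ/√n)·1(X₂ ≥ κ/√n)] ≤ (1/(β√n))(12 + 6κ/(κ-β))·P(X₂ ≥ κ/√n - 1/n)`, and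
consequently `E[√n X₂] ≤ 2κ + (1/β)(12 + 6κ/(κ-β))`. -/
theorem stmt1 {Ωp : Type*} [MeasurableSpace Ωp] (μ : Measure Ωp)
    [IsProbabilityMeasure μ] (n : ℕ) (hn : 1 ≤ n) (β : ℝ) (hβ : 0 < β)
    (hlam : 0 < 1 - β / Real.sqrt n)
    (Q : Ωp → ℕ → ℕ) (hQmeas : Measurable Q) (hQS : ∀ ω, InS n (Q ω))
    (hstat : GeneratorStationary μ n (1 - β / Real.sqrt n) Q)
    (κ : ℝ) (hκ : β < κ) :
    (∫ ω, ((Q ω 1 : ℝ) / n - κ / Real.sqrt n) *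
        (if κ / Real.sqrt n ≤ (Q ω 1 : ℝ) / n then (1 : ℝ) else 0) ∂μ) ≤
      1 / (β * Real.sqrt n) * (12 + 6 * κ / (κ - β)) *
        (μ {ω | κ / Real.sqrt n - 1 / n ≤ (Q ω 1 : ℝ) / n}).toReal ∧
    (∫ ω, Real.sqrt n * ((Q ω 1 : ℝ) / n) ∂μ) ≤
      2 * κ + 1 / β * (12 + 6 * κ / (κ - β)) := by
  have hnR : (0 : ℝ) < n := by exact_mod_cast hn
  set s := Real.sqrt n with hs
  have hs0 : 0 < s := Real.sqrt_pos.2 hnR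
  have hss : s * s = n := Real.mul_self_sqrt hnR.le
  have hκ0 : 0 < κ := hβ.trans hκ
  have hd : 0 < κ - β := by linarith
  have hbs : β < s := by
    have : β / s < 1 := by linarith
    rwa [div_lt_one hs0] at this
  have hal : (n : ℝ) * (1 - β / s) = n - β * s := by
    rw [← hss]; field_simp
  have hk := key μ n (1 - β / s) (β * s) (κ * s) hal hlam.le (by positivity)
    (by rw [← hss]; exact mul_lt_mul_of_pos_right hbs hs0)
    (mul_lt_mul_of_pos_right hκ hs0) Q hQmeas hQS hstat
  have hR : κ * s / (κ * s - β * s) = κ / (κ - β) := by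
    rw [← sub_mul, mul_div_mul_right _ _ hs0.ne']
  rw [hR] at hk
  have hKn : κ / s = κ * s / n := by rw [← hss]; field_simp
  have hset : {ω | κ / s - 1 / n ≤ (Q ω 1 : ℝ) / n} = {ω | κ * s - 1 ≤ (Q ω 1 : ℝ)} := by
    ext ω
    simp only [Set.mem_ofPred_eq]
    rw [hKn, ← sub_div, div_le_div_iff_of_pos_right hnR]
  have hint : ∀ ω, ((Q ω 1 : ℝ) / n - κ / s) *
        (if κ / s ≤ (Q ω 1 : ℝ) / n then (1 : ℝ) else 0) = (1 / n) * vv (κ * s) (Q ω 1) := by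
    intro ω
    simp only [hKn, div_le_div_iff_of_pos_right hnR]
    unfold vv
    split_ifs with h
    · rw [max_eq_left (by linarith)]; ring
    · rw [max_eq_right (by linarith)]; ring
  have hv : Integrable (fun ω => vv (κ * s) (Q ω 1)) μ :=
    integrable_nat2 μ n Q hQmeas hQS (fun _ b => vv (κ * s) b)
  have hq1 : Integrable (fun ω => s * ((Q ω 1 : ℝ) / n)) μ :=
    integrable_nat2 μ n Q hQmeas hQS (fun _ b => s * ((b : ℝ) / n))
  have hfirst : (∫ ω, ((Q ω 1 : ℝ) / n - κ / s) *
        (if κ / s ≤ (Q ω 1 : ℝ) / n then (1 : ℝ) else 0) ∂μ) ≤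
      1 / (β * s) * (12 + 6 * κ / (κ - β)) *
        (μ {ω | κ / s - 1 / n ≤ (Q ω 1 : ℝ) / n}).toReal := by
    rw [hset]
    simp_rw [hint]
    rw [integral_const_mul]
    set P := (μ {ω | κ * s - 1 ≤ (Q ω 1 : ℝ)}).toReal
    have hP : 0 ≤ P := ENNReal.toReal_nonneg
    have hR0 : 0 ≤ κ / (κ - β) := by positivity
    rw [mul_div_assoc]
    calc 1 / (n : ℝ) * ∫ ω, vv (κ * s) (Q ω 1) ∂μ
        = 1 / (n * (β * s)) * (β * s * ∫ ω, vv (κ * s) (Q ω 1) ∂μ) := by field_simp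
      _ ≤ 1 / (n * (β * s)) * (n * (2 + κ / (κ - β)) * P) :=
          mul_le_mul_of_nonneg_left hk (by positivity)
      _ = 1 / (β * s) * (2 + κ / (κ - β)) * P := by field_simp
      _ ≤ _ := by gcongr <;> linarith
  refine ⟨hfirst, ?_⟩
  have hP1 : (μ {ω | κ / s - 1 / n ≤ (Q ω 1 : ℝ) / n}).toReal ≤ 1 := by
    simpa [Measure.real] using measureReal_le_one (μ := μ) (s := {ω | κ / s - 1 / n ≤ (Q ω 1 : ℝ) / n})
  simp_rw [hint] at hfirst
  rw [integral_const_mul] at hfirst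
  have hC : 0 ≤ 12 + 6 * κ / (κ - β) := by positivity
  have hfirst2 : 1 / (n : ℝ) * ∫ ω, vv (κ * s) (Q ω 1) ∂μ ≤
      1 / (β * s) * (12 + 6 * κ / (κ - β)) := by
    refine hfirst.trans ?_
    exact mul_le_of_le_one_right (by positivity) hP1
  have hpt : ∀ ω, s * ((Q ω 1 : ℝ) / n) ≤ κ + s / n * vv (κ * s) (Q ω 1) := by
    intro ω
    have h1 : (Q ω 1 : ℝ) - κ * s ≤ vv (κ * s) (Q ω 1) := le_max_left _ _
    have h2 := mul_le_mul_of_nonneg_left h1 (show 0 ≤ s / n by positivity)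
    have h3 : s / n * (κ * s) = κ := by rw [← hss]; field_simp
    have h4 : s * ((Q ω 1 : ℝ) / n) = s / n * (Q ω 1 : ℝ) := by ring
    rw [mul_sub, h3] at h2
    linarith
  have hle := integral_mono hq1 ((integrable_const κ).add (hv.const_mul (s / n))) hpt
  rw [integral_add' (integrable_const κ) (hv.const_mul (s / n)),
    integral_const_mul (s / n) (fun ω => vv (κ * s) (Q ω 1))] at hle
  rw [integral_const, probReal_univ, smul_eq_mul, one_mul] at hle
  have h5 := mul_le_mul_of_nonneg_left hfirst2 hs0.le
  have h6 : s * (1 / (n : ℝ) * ∫ ω, vv (κ * s) (Q ω 1) ∂μ) =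
      s / n * ∫ ω, vv (κ * s) (Q ω 1) ∂μ := by ring
  have h7 : s * (1 / (β * s) * (12 + 6 * κ / (κ - β))) = 1 / β * (12 + 6 * κ / (κ - β)) := by
    field_simp
  linarith
end

section
/- Fix κ > β and let h(x) = max(x_2 − κ/√n, 0). There exists a function f : Ω → ℝ solving the fluid PDE for h, having absolutely continuous first-order partial derivatives, whose second-order weak derivatives satisfy: (i) f_{11}(x), f_{12}(x), f_{22}(x) ≥ 0 for all x ∈ Ω; (ii) f_{11}(x) = f_{22}(x) = 0 whenever x_2 ∈ [0, κ/√n]; and (iii) f_{11}(x) ≤ (√n/β)·(κ/(κ−β) + 1) and f_{22}(x) ≤ (√n/β)·(5 + 2κ/(κ−β)) whenever x_2 ≥ κ/√n. -/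
open MeasureTheory

section helpers

open Set

lemma ftc_aux (F g : ℝ → ℝ) (hF : Continuous F) (S : Finset ℝ) : ∀ a b : ℝ, a ≤ b → 
    (∀ x ∈ Ioo a b, x ∉ S → HasDerivAt F (g x) x) → (∀ x ∈ Ioo a b, 0 ≤ g x) →
    IntervalIntegrable g volume a b := by
  induction S using Finset.induction_on with
  | empty => 
    intro a b hab h1 h2
    apply intervalIntegral.intervalIntegrable_deriv_of_nonneg (g := F) hF.continuousOn
    · rw [min_eq_left hab, max_eq_right hab]; intro x hx; exact h1 x hx (by simp)
    · rw [min_eq_left hab, max_eq_right hab]; exact h2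
  | insert c S hc ih =>
    intro a b hab h1 h2
    by_cases hcab : c ∈ Ioo a b
    · refine (ih a c hcab.1.le ?_ ?_).trans (ih c b hcab.2.le ?_ ?_)
      · intro x hx hxS
        exact h1 x ⟨hx.1, hx.2.trans hcab.2⟩ (by simp [hxS, hx.2.ne])
      · intro x hx
        exact h2 x ⟨hx.1, hx.2.trans hcab.2⟩
      · intro x hx hxS
        exact h1 x ⟨hcab.1.trans hx.1, hx.2⟩ (by simp [hxS, hx.1.ne'])
      · intro x hx
        exact h2 x ⟨hcab.1.trans hx.1, hx.2⟩
    · refine ih a b hab ?_ h2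
      intro x hx hxS
      refine h1 x hx ?_
      simp only [Finset.mem_insert, not_or]
      exact ⟨fun h => hcab (h ▸ hx), hxS⟩

lemma ftc_aux2 (F g : ℝ → ℝ) (hF : Continuous F) (S : Finset ℝ) (a b : ℝ)
    (h1 : ∀ x ∈ Ioo (min a b) (max a b), x ∉ S → HasDerivAt F (g x) x)
    (h2 : ∀ x ∈ Ioo (min a b) (max a b), 0 ≤ g x) :
    IntervalIntegrable g volume a b ∧ F b - F a = ∫ u in a..b, g u := by
  have hi : IntervalIntegrable g volume a b := by
    rcases le_total a b with hab | hab
    · rw [min_eq_left hab, max_eq_right hab] at h1 h2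
      exact ftc_aux F g hF S a b hab h1 h2
    · rw [min_eq_right hab, max_eq_left hab] at h1 h2
      exact (ftc_aux F g hF S b a hab h1 h2).symm
  refine ⟨hi, ?_⟩
  symm
  exact integral_eq_of_hasDerivAt_off_countable F g S.countable_toSet hF.continuousOn
    (fun x hx => h1 x hx.1 (by simpa using hx.2)) hi

lemma exists_M (b k : ℝ) (hb : 0 < b) (hk : b < k) :
    ∃ M : ℝ → ℝ, Continuous M ∧ Monotone M ∧ (∀ s ≤ Real.log k + b / k, M s = k) ∧
      (∀ y, k ≤ y → M (Real.log y + b / y) = y) ∧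
      (∀ s, Real.log k + b / k < s → k < M s ∧ Real.log (M s) + b / M s = s ∧
        HasDerivAt M (M s ^ 2 / (M s - b)) s) := by
  set G : ℝ → ℝ := fun y => Real.log (max y k) + b / (max y k) + min (y - k) 0 with hG
  have hk0 : 0 < k := hb.trans hk
  have hGd : ∀ y, 0 < y → HasDerivAt (fun y => Real.log y + b / y) ((y - b) / y ^ 2) y := by
    intro y hy
    have h := (Real.hasDerivAt_log hy.ne').add ((hasDerivAt_const y b).div (hasDerivAt_id y) hy.ne')
    refine HasDerivAt.congr_deriv h ?_
    simp only [id]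
    field_simp
    ring
  have hGm : StrictMonoOn (fun y => Real.log y + b / y) (Ici k) := by
    apply strictMonoOn_of_deriv_pos (convex_Ici k)
    · intro y hy
      exact (hGd y (hk0.trans_le hy)).continuousAt.continuousWithinAt
    · intro y hy
      rw [interior_Ici] at hy
      have hy' : k < y := hy
      rw [(hGd y (hk0.trans hy)).deriv]
      have : 0 < y := hk0.trans hy
      have : 0 < y - b := by linarith
      positivity
  have hGmono : StrictMono G := by
    intro x y hxy
    simp only [hG]
    have h1 := hGm.monotoneOn (mem_Ici.2 (le_max_right x k))
      (mem_Ici.2 (le_max_right y k)) (max_le_max hxy.le le_rfl)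
    rcases lt_or_ge x k with h | h
    · have : min (x - k) 0 < min (y - k) 0 := by
        rw [min_eq_left (by linarith)]
        exact lt_min (by linarith) (by linarith)
      linarith
    · have h2 := hGm (show x ∈ Ici k from h) (show y ∈ Ici k from h.trans hxy.le) hxy
      simp only at h2
      rw [max_eq_left h, max_eq_left (h.trans hxy.le), min_eq_right (by linarith), min_eq_right (by linarith)]
      linarith
  have hGc : Continuous G := by
    have hm : ∀ y, max y k ≠ 0 := fun y => (hk0.trans_le (le_max_right y k)).ne'
    simp only [hG]
    fun_prop (disch := exact hm _)
  have hGtop : Filter.Tendsto G Filter.atTop Filter.atTop := by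
    apply Filter.tendsto_atTop_mono' _ _ Real.tendsto_log_atTop
    filter_upwards [Filter.eventually_ge_atTop k] with y hy
    simp only [hG]
    rw [max_eq_left hy, min_eq_right (by linarith)]
    have : 0 < y := hk0.trans_le hy
    have : 0 < b / y := by positivity
    linarith
  have hGbot : Filter.Tendsto G Filter.atBot Filter.atBot := by
    have : Filter.Tendsto (fun y : ℝ => y + (Real.log k + b / k - k)) Filter.atBot Filter.atBot :=
      Filter.tendsto_atBot_add_const_right _ _ Filter.tendsto_id
    apply this.congr'
    filter_upwards [Filter.eventually_le_atBot k] with y hy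
    simp only [hG]
    rw [max_eq_right hy, min_eq_left (by linarith)]
    ring
  have hGs : Function.Surjective G := hGc.surjective hGtop hGbot
  set e := hGmono.orderIsoOfSurjective G hGs with he
  have hGe : ∀ y, e y = G y := fun y => rfl
  have heG : ∀ s, G (e.symm s) = s := fun s => e.apply_symm_apply s
  have hGk : G k = Real.log k + b / k := by simp [hG]
  have hGy : ∀ y, k ≤ y → G y = Real.log y + b / y := by
    intro y hy
    simp only [hG]
    rw [max_eq_left hy, min_eq_right (by linarith), add_zero]
  refine ⟨fun s => max (e.symm s) k, e.symm.continuous.max continuous_const,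
    fun x y hxy => max_le_max (e.symm.monotone hxy) le_rfl, ?_, ?_, ?_⟩
  · intro s hs
    apply max_eq_right
    rw [← hGmono.le_iff_le, heG, hGk]; exact hs
  · intro y hy
    have : e.symm (Real.log y + b / y) = y := by
      rw [← hGy y hy]; exact e.symm_apply_apply y
    simp only [this]
    exact max_eq_left hy
  · intro s hs
    have hlt : k < e.symm s := by
      rw [← hGmono.lt_iff_lt, heG, hGk]; exact hs
    have hM : max (e.symm s) k = e.symm s := max_eq_left hlt.le
    simp only [hM]
    refine ⟨hlt, ?_, ?_⟩
    · rw [← hGy _ hlt.le, heG]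
    · have hd : HasDerivAt G ((e.symm s - b) / (e.symm s) ^ 2) (e.symm s) := by
        apply (hGd _ (hk0.trans hlt)).congr_of_eventuallyEq
        filter_upwards [lt_mem_nhds hlt] with y hy using hGy y hy.le
      have hpos : 0 < e.symm s := hk0.trans hlt
      have hpos' : 0 < e.symm s - b := by linarith
      have h := hd.of_local_left_inverse e.symm.continuous.continuousAt (by positivity)
        (Filter.Eventually.of_forall heG)
      rw [inv_div] at h
      apply h.congr_of_eventuallyEq
      filter_upwards [e.symm.continuous.continuousAt.eventually (lt_mem_nhds hlt)] with y hy
      exact max_eq_left hy.le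

lemma alg_f12 (b k x1 x2 Y : ℝ) (hb : 0 < b) (hk : b < k) (hx1 : x1 ≤ 0) (hY : k ≤ Y)
    (hYx : Y ≤ x2) :
    0 ≤ (2 * Y - k) * Y ^ 2 / (b * (Y - b)) * ((x2 - x1 - b) / x2 ^ 2) / x2
      - Y * (Y - k) / b / x2 ^ 2 := by
  have hYb : 0 < Y - b := by linarith
  have hY0 : 0 < Y := by linarith
  have hx : 0 < x2 := by linarith
  have e : (2 * Y - k) * Y ^ 2 / (b * (Y - b)) * ((x2 - x1 - b) / x2 ^ 2) / x2
      - Y * (Y - k) / b / x2 ^ 2 =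
      Y * ((2 * Y - k) * (Y * (x2 - x1 - b)) - (Y - k) * (x2 * (Y - b))) / (b * (Y - b) * x2 ^ 3) := by
    field_simp
  rw [e]
  have h1 : x2 * (Y - b) ≤ Y * (x2 - x1 - b) := by nlinarith
  have h2 : (Y - k) * (x2 * (Y - b)) ≤ (2 * Y - k) * (Y * (x2 - x1 - b)) := by
    apply mul_le_mul (by linarith) h1 (by positivity) (by linarith)
  have h3 : 0 ≤ (2 * Y - k) * (Y * (x2 - x1 - b)) - (Y - k) * (x2 * (Y - b)) := by linarith
  positivity

lemma alg_f22 (b k x1 x2 Y : ℝ) (hb : 0 < b) (hk : b < k) (hY : k ≤ Y)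
    (hYx : Y ≤ x2) :
    0 ≤ k / x2 ^ 2 + (2 * Y - k) * Y ^ 2 / (b * (Y - b)) * ((x2 - x1 - b) / x2 ^ 2) ^ 2
      + Y * (Y - k) / b * ((2 * (x1 + b) - x2) / x2 ^ 3) := by
  have hYb : 0 < Y - b := by linarith
  have hY0 : 0 < Y := by linarith
  have hk0 : 0 < k := by linarith
  have hx : 0 < x2 := by linarith
  have h1 : Y * (Y - k) / b ≤ (2 * Y - k) * Y ^ 2 / (b * (Y - b)) := by
    rw [div_le_div_iff₀ hb (by positivity)]
    have h2 : (Y - k) * (Y - b) ≤ (2 * Y - k) * Y := 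
      mul_le_mul (by linarith) (by linarith) hYb.le (by linarith)
    have := mul_le_mul_of_nonneg_left h2 (show 0 ≤ Y * b by positivity)
    nlinarith
  have h0 : 0 ≤ Y * (Y - k) / b := by
    have : 0 ≤ Y - k := by linarith
    positivity
  have h3 := mul_le_mul_of_nonneg_right h1 (sq_nonneg ((x2 - x1 - b) / x2 ^ 2))
  have h4 : (2 * (x1 + b) - x2) / x2 ^ 3 =
     ((x2 - x1 - b) / x2 ^ 2 - 1 / x2) ^ 2 - ((x2 - x1 - b) / x2 ^ 2) ^ 2 := by
    field_simp
    ring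
  have h5 : 0 ≤ k / x2 ^ 2 := by positivity
  have h6 := mul_nonneg h0 (sq_nonneg ((x2 - x1 - b) / x2 ^ 2 - 1 / x2))
  rw [h4]
  nlinarith

lemma alg_chi (b k Y : ℝ) (hb : 0 < b) (hk : b < k) (hY : k ≤ Y) :
    (2 * Y - k) / (Y - b) ≤ k / (k - b) + 1 := by
  have hYb : 0 < Y - b := by linarith
  have hkb : 0 < k - b := by linarith
  rw [div_add_one hkb.ne', div_le_div_iff₀ hYb hkb]
  nlinarith

lemma alg_f11 (b k x2 Y : ℝ) (hb : 0 < b) (hk : b < k) (hY : k ≤ Y) (hYx : Y ≤ x2) :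
    (2 * Y - k) * Y ^ 2 / (b * (Y - b)) / x2 ^ 2 ≤ 1 / b * (k / (k - b) + 1) := by
  have hYb : 0 < Y - b := by linarith
  have hY0 : 0 < Y := by linarith
  have hx : 0 < x2 := by linarith
  have e : (2 * Y - k) * Y ^ 2 / (b * (Y - b)) / x2 ^ 2
      = 1 / b * ((2 * Y - k) / (Y - b) * (Y / x2) ^ 2) := by
    field_simp
  rw [e]
  apply mul_le_mul_of_nonneg_left _ (by positivity)
  refine le_trans ?_ (alg_chi b k Y hb hk hY)
  apply mul_le_of_le_one_right
  · have : 0 ≤ 2 * Y - k := by linarith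
    positivity
  · have : Y / x2 ≤ 1 := (div_le_one hx).2 hYx
    have : 0 ≤ Y / x2 := by positivity
    nlinarith

lemma alg_f22_le (b k x1 x2 Y : ℝ) (hb : 0 < b) (hk : b < k) (hx1 : x1 ≤ 0) (hY : k ≤ Y)
    (hYx : Y ≤ x2) (hG : Real.log Y + b / Y = (x1 + b) / x2 + Real.log x2) :
    k / x2 ^ 2 + (2 * Y - k) * Y ^ 2 / (b * (Y - b)) * ((x2 - x1 - b) / x2 ^ 2) ^ 2
      + Y * (Y - k) / b * ((2 * (x1 + b) - x2) / x2 ^ 3)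
      ≤ 1 / b * (5 + 2 * (k / (k - b))) := by
  have hYb : 0 < Y - b := by linarith
  have hkb : 0 < k - b := by linarith
  have hY0 : 0 < Y := by linarith
  have hk0 : 0 < k := by linarith
  have hx : 0 < x2 := by linarith
  have hd : 0 < x2 - x1 - b := by linarith
  -- d / x2 ≤ x2 / Y
  have hdr : (x2 - x1 - b) / x2 ≤ x2 / Y := by
    have h1 : (x2 - x1 - b) / x2 = 1 + Real.log (x2 / Y) - b / Y := by
      rw [Real.log_div hx.ne' hY0.ne']
      have : (x2 - x1 - b) / x2 = 1 - (x1 + b) / x2 := by field_simp; ring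
      rw [this]; linarith
    have h2 := Real.log_le_sub_one_of_pos (show 0 < x2 / Y by positivity)
    have h3 : 0 < b / Y := by positivity
    linarith
  have t1 : k / x2 ^ 2 ≤ 1 / b := by
    rw [div_le_div_iff₀ (by positivity) hb]
    nlinarith
  have t2 : (2 * Y - k) * Y ^ 2 / (b * (Y - b)) * ((x2 - x1 - b) / x2 ^ 2) ^ 2
      ≤ 1 / b * (k / (k - b) + 1) := by
    have e : (2 * Y - k) * Y ^ 2 / (b * (Y - b)) * ((x2 - x1 - b) / x2 ^ 2) ^ 2
        = 1 / b * ((2 * Y - k) / (Y - b) * ((x2 - x1 - b) / x2 * (Y / x2)) ^ 2) := by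
      field_simp
    rw [e]
    apply mul_le_mul_of_nonneg_left _ (by positivity)
    refine le_trans ?_ (alg_chi b k Y hb hk hY)
    apply mul_le_of_le_one_right
    · have : 0 ≤ 2 * Y - k := by linarith
      positivity
    · have h1 : (x2 - x1 - b) / x2 * (Y / x2) ≤ x2 / Y * (Y / x2) :=
        mul_le_mul_of_nonneg_right hdr (by positivity)
      have h2 : x2 / Y * (Y / x2) = 1 := by field_simp
      have h3 : 0 ≤ (x2 - x1 - b) / x2 * (Y / x2) := by positivity
      rw [h2] at h1
      nlinarith
  have t3 : Y * (Y - k) / b * ((2 * (x1 + b) - x2) / x2 ^ 3) ≤ 1 / b := by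
    have e : Y * (Y - k) / b * ((2 * (x1 + b) - x2) / x2 ^ 3)
       = 1 / b * (Y * (Y - k) * (2 * (x1 + b) - x2) / x2 ^ 3) := by
      field_simp
    rw [e]
    apply mul_le_of_le_one_right (by positivity)
    rw [div_le_one (by positivity)]
    have h0 : 0 ≤ Y * (Y - k) := mul_nonneg hY0.le (by linarith)
    have h1 : Y * (Y - k) ≤ x2 * x2 := mul_le_mul hYx (by linarith) (by linarith) hx.le
    have h2 : 2 * (x1 + b) - x2 ≤ x2 := by linarith
    calc Y * (Y - k) * (2 * (x1 + b) - x2) ≤ Y * (Y - k) * x2 := mul_le_mul_of_nonneg_left h2 h0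
      _ ≤ x2 * x2 * x2 := mul_le_mul_of_nonneg_right h1 hx.le
      _ = x2 ^ 3 := by ring
  have hc : 0 ≤ k / (k - b) := by positivity
  have hbi : 0 < 1 / b := by positivity
  have : 0 ≤ 1 / b * (k / (k - b)) := by positivity
  nlinarith

theorem core (b k : ℝ) (hb : 0 < b) (hk : b < k) :
    ∃ f f1 f2 f11 f12 f22 : ℝ → ℝ → ℝ,
      (∀ x1 ≤ (0 : ℝ), ∀ x2 : ℝ, 0 ≤ x2 →
        HasDerivWithinAt (fun t => f t x2) (f1 x1 x2) (Set.Iic 0) x1 ∧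
          HasDerivWithinAt (fun t => f x1 t) (f2 x1 x2) (Set.Ici 0) x2) ∧
      (∀ x2 : ℝ, 0 ≤ x2 → ∀ a ≤ (0 : ℝ), ∀ b ≤ (0 : ℝ),
        IntervalIntegrable (fun u => f11 u x2) volume a b ∧
          f1 b x2 - f1 a x2 = ∫ u in a..b, f11 u x2) ∧
      (∀ x1 ≤ (0 : ℝ), ∀ a b : ℝ, 0 ≤ a → 0 ≤ b →
        IntervalIntegrable (fun u => f12 x1 u) volume a b ∧
          f1 x1 b - f1 x1 a = ∫ u in a..b, f12 x1 u) ∧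
      (∀ x1 ≤ (0 : ℝ), ∀ a b : ℝ, 0 ≤ a → 0 ≤ b →
        IntervalIntegrable (fun u => f22 x1 u) volume a b ∧
          f2 x1 b - f2 x1 a = ∫ u in a..b, f22 x1 u) ∧
      (∀ x1 ≤ (0 : ℝ), ∀ x2 : ℝ, 0 ≤ x2 →
        (-x1 + x2 - b) * f1 x1 x2 - x2 * f2 x1 x2 =
          -max (x2 - k) 0) ∧
      (∀ x2 : ℝ, 0 ≤ x2 → f1 0 x2 = f2 0 x2) ∧
      (∀ x1 ≤ (0 : ℝ), ∀ x2 : ℝ, 0 ≤ x2 →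
        0 ≤ f11 x1 x2 ∧ 0 ≤ f12 x1 x2 ∧ 0 ≤ f22 x1 x2) ∧
      (∀ x1 ≤ (0 : ℝ), ∀ x2 : ℝ, 0 ≤ x2 → x2 ≤ k →
        f11 x1 x2 = 0 ∧ f22 x1 x2 = 0) ∧
      (∀ x1 ≤ (0 : ℝ), ∀ x2 : ℝ, k ≤ x2 →
        f11 x1 x2 ≤ 1 / b * (k / (k - b) + 1) ∧
          f22 x1 x2 ≤ 1 / b * (5 + 2 * (k / (k - b)))) := by
  obtain ⟨M, hMc, hMm, hM0, hMG, hM1⟩ := exists_M b k hb hk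
  have hk0 : 0 < k := hb.trans hk
  have hkb : 0 < k - b := by linarith
  set s0 := Real.log k + b / k with hs0
  have hMk : ∀ s, k ≤ M s := by
    intro s
    rcases le_or_gt s s0 with h | h
    · exact (hM0 s h).ge
    · exact (hM1 s h).1.le
  have hMpos : ∀ s, 0 < M s := fun s => hk0.trans_le (hMk s)
  have hMne : ∀ s, M s ≠ 0 := fun s => (hMpos s).ne'
  set φ : ℝ → ℝ := fun s => - M s + k * Real.log (M s) + (M s - k) ^ 2 / (2 * b) with hφdef
  set ψ : ℝ → ℝ := fun s => M s * (M s - k) / b with hψdef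
  set χ : ℝ → ℝ := fun s => if s ≤ s0 then 0 else
    (2 * M s - k) * M s ^ 2 / (b * (M s - b)) with hχdef
  have hψ0 : ∀ s ≤ s0, ψ s = 0 := by
    intro s hs; simp [hψdef, hM0 s hs]
  have hχ0 : ∀ s ≤ s0, χ s = 0 := by
    intro s hs; simp [hχdef, hs]
  have hφc : Continuous φ := by
    simp only [hφdef]; fun_prop (disch := exact hMne _)
  have hψc : Continuous ψ := by
    simp only [hψdef]; fun_prop
  have hψd : ∀ s, s ≠ s0 → HasDerivAt ψ (χ s) s := by
    intro s hs
    rcases lt_or_gt_of_ne hs with h | h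
    · rw [hχ0 s h.le]
      apply (hasDerivAt_const s (0 : ℝ)).congr_of_eventuallyEq
      filter_upwards [gt_mem_nhds h] with t ht using hψ0 t ht.le
    · obtain ⟨h1, h2, h3⟩ := hM1 s h
      have hMb : M s - b ≠ 0 := by linarith
      have hd := (h3.mul (h3.sub_const k)).div_const b
      have e : χ s = (M s ^ 2 / (M s - b) * (M s - k) + M s * (M s ^ 2 / (M s - b))) / b := by
        simp only [hχdef, if_neg (not_le.2 h)]
        field_simp
        ring
      rw [e]; exact hd
  have hφd : ∀ s, HasDerivAt φ (ψ s) s := by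
    apply hasDerivAt_of_hasDerivAt_of_ne' (x := s0) _ hφc.continuousAt hψc.continuousAt
    intro s hs
    rcases lt_or_gt_of_ne hs with h | h
    · rw [hψ0 s h.le]
      apply (hasDerivAt_const s (- k + k * Real.log k)).congr_of_eventuallyEq
      filter_upwards [gt_mem_nhds h] with t ht
      simp [hφdef, hM0 t ht.le]
    · obtain ⟨h1, h2, h3⟩ := hM1 s h
      have hMb : M s - b ≠ 0 := by linarith
      have hM := hMne s
      have hd := (h3.neg.add ((h3.log hM).const_mul k)).add
        (((h3.sub_const k).pow 2).div_const (2 * b))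
      refine HasDerivAt.congr_deriv hd ?_
      simp only [hψdef]
      field_simp
      simp
      ring
  set I : ℝ → ℝ → ℝ := fun x1 x2 => (x1 + b) / x2 + Real.log x2 with hI
  have hI1 : ∀ x1 x2, HasDerivAt (fun t => I t x2) (1 / x2) x1 := by
    intro x1 x2
    exact (((hasDerivAt_id x1).add_const b).div_const x2).add_const _
  have hI2 : ∀ x1 x2, 0 < x2 → HasDerivAt (fun t => I x1 t) ((x2 - x1 - b) / x2 ^ 2) x2 := by
    intro x1 x2 hx
    have h := ((hasDerivAt_const x2 (x1 + b)).div (hasDerivAt_id x2) hx.ne').add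
      (Real.hasDerivAt_log hx.ne')
    refine HasDerivAt.congr_deriv h ?_
    simp only [id]
    field_simp
    ring
  have hI22 : ∀ x1 x2, 0 < x2 → HasDerivAt (fun t => (t - x1 - b) / t ^ 2)
      ((2 * (x1 + b) - x2) / x2 ^ 3) x2 := by
    intro x1 x2 hx
    have h := (((hasDerivAt_id x2).sub_const x1).sub_const b).div ((hasDerivAt_id x2).pow 2)
      (pow_pos hx 2).ne'
    refine HasDerivAt.congr_deriv h ?_
    simp
    field_simp
    ring
  -- I below the boundary value
  have hIG : ∀ x1 ≤ (0 : ℝ), ∀ x2, 0 < x2 → I x1 x2 ≤ Real.log x2 + b / x2 := by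
    intro x1 h1 x2 h2
    have : (x1 + b) / x2 ≤ b / x2 := by gcongr; linarith
    simp only [hI]; linarith
  have hIk : ∀ x1 ≤ (0 : ℝ), I x1 k ≤ s0 := fun x1 h1 => hIG x1 h1 k hk0
  have hMI : ∀ x1 ≤ (0 : ℝ), ∀ x2, k ≤ x2 → M (I x1 x2) ≤ x2 := by
    intro x1 h1 x2 h2
    calc M (I x1 x2) ≤ M (Real.log x2 + b / x2) := hMm (hIG x1 h1 x2 (hk0.trans_le h2))
      _ = x2 := hMG x2 h2
  -- uniqueness of the exceptional point
  have hIinj : ∀ x1 ≤ (0 : ℝ), StrictMonoOn (fun t => I x1 t) (Ici k) := by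
    intro x1 h1
    apply strictMonoOn_of_deriv_pos (convex_Ici k)
    · intro y hy
      exact (hI2 x1 y (hk0.trans_le hy)).continuousAt.continuousWithinAt
    · intro y hy
      rw [interior_Ici] at hy
      have hy' : k < y := hy
      have hy0 : 0 < y := hk0.trans hy
      rw [(hI2 x1 y hy0).deriv]
      have : 0 < y - x1 - b := by linarith
      positivity
  have hexc : ∀ x1 ≤ (0 : ℝ), ∃ c, ∀ u, k < u → u ≠ c → I x1 u ≠ s0 := by
    intro x1 h1
    by_cases h : ∃ c, k < c ∧ I x1 c = s0
    · obtain ⟨c, hc, hc2⟩ := h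
      refine ⟨c, fun u hu huc hus => huc ?_⟩
      exact (hIinj x1 h1).injOn (mem_Ici.2 hu.le) (mem_Ici.2 hc.le) (hus.trans hc2.symm)
    · push Not at h
      exact ⟨0, fun u hu _ => h u hu⟩
  have hmk : ∀ x : ℝ, k ≤ max x k := fun x => le_max_right x k
  have hmpos : ∀ x : ℝ, 0 < max x k := fun x => hk0.trans_le (hmk x)
  have hmne : ∀ x : ℝ, max x k ≠ 0 := fun x => (hmpos x).ne'
  have hIc : ∀ x1, Continuous (fun t => I x1 (max t k)) := by
    intro x1
    simp only [hI]
    fun_prop (disch := exact hmne _)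
  set F : ℝ → ℝ → ℝ := fun x1 x2 => max x2 k - k * Real.log (max x2 k) + φ (I x1 (max x2 k)) with hF
  set F1 : ℝ → ℝ → ℝ := fun x1 x2 => ψ (I x1 (max x2 k)) / max x2 k with hF1
  set F2 : ℝ → ℝ → ℝ := fun x1 x2 => 1 - k / max x2 k +
    ψ (I x1 (max x2 k)) * ((max x2 k - x1 - b) / (max x2 k) ^ 2) with hF2
  set F11 : ℝ → ℝ → ℝ := fun x1 x2 => χ (I x1 (max x2 k)) / (max x2 k) ^ 2 with hF11
  set F12 : ℝ → ℝ → ℝ := fun x1 x2 => if x2 ≤ k then 0 else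
    χ (I x1 x2) * ((x2 - x1 - b) / x2 ^ 2) / x2 - ψ (I x1 x2) / x2 ^ 2 with hF12
  set F22 : ℝ → ℝ → ℝ := fun x1 x2 => if x2 ≤ k then 0 else
    k / x2 ^ 2 + χ (I x1 x2) * ((x2 - x1 - b) / x2 ^ 2) ^ 2 +
      ψ (I x1 x2) * ((2 * (x1 + b) - x2) / x2 ^ 3) with hF22
  have hFc : ∀ x1, Continuous (fun t => F x1 t) := by
    intro x1
    have h := hφc.comp (hIc x1)
    have hl : Continuous (fun t : ℝ => max t k - k * Real.log (max t k)) := by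
      fun_prop (disch := exact hmne _)
    exact hl.add h
  have hF1c : ∀ x1, Continuous (fun t => F1 x1 t) := by
    intro x1
    have h := hψc.comp (hIc x1)
    exact h.div (continuous_id.max continuous_const) hmne
  have hF2c : ∀ x1, Continuous (fun t => F2 x1 t) := by
    intro x1
    have h := hψc.comp (hIc x1)
    have h2 : ∀ x : ℝ, (max x k) ^ 2 ≠ 0 := fun x => pow_ne_zero 2 (hmne x)
    have hl : Continuous (fun t : ℝ => 1 - k / max t k) := by
      fun_prop (disch := exact hmne _)
    have hr : Continuous (fun t : ℝ => (max t k - x1 - b) / (max t k) ^ 2) := by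
      fun_prop (disch := exact h2 _)
    exact hl.add (h.mul hr)
  have hF1low : ∀ x1 ≤ (0 : ℝ), ∀ x2 ≤ k, F1 x1 x2 = 0 := by
    intro x1 h1 x2 h2
    simp only [hF1, max_eq_right h2, hψ0 _ (hIk x1 h1), zero_div]
  have hF2low : ∀ x1 ≤ (0 : ℝ), ∀ x2 ≤ k, F2 x1 x2 = 0 := by
    intro x1 h1 x2 h2
    simp only [hF2, max_eq_right h2, hψ0 _ (hIk x1 h1), div_self hk0.ne']
    ring
  -- nonnegativity
  have hnn : ∀ x1 ≤ (0 : ℝ), ∀ x2 : ℝ, 0 ≤ F11 x1 x2 ∧ 0 ≤ F12 x1 x2 ∧ 0 ≤ F22 x1 x2 := by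
    intro x1 h1 x2
    refine ⟨?_, ?_, ?_⟩
    · simp only [hF11]
      have : 0 ≤ χ (I x1 (max x2 k)) := by
        simp only [hχdef]
        split_ifs
        · exact le_rfl
        · have h2 := hMk (I x1 (max x2 k))
          have h3 : 0 ≤ 2 * M (I x1 (max x2 k)) - k := by linarith
          have h4 : 0 ≤ M (I x1 (max x2 k)) - b := by linarith
          positivity
      positivity
    · simp only [hF12]
      split_ifs with h
      · exact le_rfl
      · push Not at h
        rcases le_or_gt (I x1 x2) s0 with hs | hs
        · rw [hχ0 _ hs, hψ0 _ hs]; simp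
        · simp only [hχdef, if_neg (not_le.2 hs)]
          exact alg_f12 b k x1 x2 _ hb hk h1 (hMk _) (hMI x1 h1 x2 h.le)
    · simp only [hF22]
      split_ifs with h
      · exact le_rfl
      · push Not at h
        rcases le_or_gt (I x1 x2) s0 with hs | hs
        · rw [hχ0 _ hs, hψ0 _ hs]
          have : 0 ≤ k / x2 ^ 2 := by positivity
          simpa using this
        · simp only [hχdef, if_neg (not_le.2 hs)]
          exact alg_f22 b k x1 x2 _ hb hk (hMk _) (hMI x1 h1 x2 h.le)
  refine ⟨F, F1, F2, F11, F12, F22, ?_, ?_, ?_, ?_, ?_, ?_, ?_, ?_, ?_⟩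
  · intro x1 h1 x2 h2
    constructor
    · apply HasDerivAt.hasDerivWithinAt
      have h := ((hφd (I x1 (max x2 k))).comp x1 (hI1 x1 (max x2 k))).const_add
        (max x2 k - k * Real.log (max x2 k))
      refine HasDerivAt.congr_deriv h ?_
      simp only [hF1]; ring
    · apply HasDerivAt.hasDerivWithinAt
      refine hasDerivAt_of_hasDerivAt_of_ne' (f := fun t => F x1 t) (g := fun t => F2 x1 t)
        (x := k) ?_ (hFc x1).continuousAt (hF2c x1).continuousAt x2
      intro y hy
      rcases lt_or_gt_of_ne hy with h | h
      · rw [hF2low x1 h1 y h.le]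
        apply (hasDerivAt_const y (F x1 k)).congr_of_eventuallyEq
        filter_upwards [gt_mem_nhds h] with t ht
        simp only [hF, max_eq_right (le_of_lt ht), max_self]
      · have hy0 : 0 < y := hk0.trans h
        have hd := ((hasDerivAt_id y).sub ((Real.hasDerivAt_log hy0.ne').const_mul k)).add
          ((hφd (I x1 y)).comp y (hI2 x1 y hy0))
        have e : F2 x1 y = 1 - k * y⁻¹ + ψ (I x1 y) * ((y - x1 - b) / y ^ 2) := by
          simp only [hF2, max_eq_left h.le]; ring
        rw [e]
        apply hd.congr_of_eventuallyEq
        filter_upwards [lt_mem_nhds h] with t ht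
        simp [hF, max_eq_left (le_of_lt ht)]
  · intro x2 h2 a ha c hc
    refine ftc_aux2 (fun t => F1 t x2) (fun t => F11 t x2) ?_ {(s0 - Real.log (max x2 k)) * max x2 k - b} a c ?_ ?_
    · simp only [hF1, hI]
      fun_prop
    · intro x hx hxS
      have hne : I x (max x2 k) ≠ s0 := by
        intro h
        apply hxS
        rw [Finset.mem_singleton, ← h]
        have := hmne x2
        simp only [hI]; field_simp; ring
      have hd := ((hψd _ hne).comp x (hI1 x (max x2 k))).div_const (max x2 k)
      have e : F11 x x2 = χ (I x (max x2 k)) * (1 / max x2 k) / max x2 k := by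
        have := hmne x2
        simp only [hF11]; field_simp
      rw [e]; exact hd
    · intro x hx
      exact (hnn x (hx.2.le.trans (max_le ha hc)) x2).1
  · intro x1 h1 a c ha hc
    obtain ⟨d, hd⟩ := hexc x1 h1
    refine ftc_aux2 (fun t => F1 x1 t) (fun t => F12 x1 t) (hF1c x1) {k, d} a c ?_
      (fun x _ => (hnn x1 h1 x).2.1)
    intro x _ hxS
    simp only [Finset.mem_insert, Finset.mem_singleton, not_or] at hxS
    rcases lt_or_gt_of_ne hxS.1 with h | h
    · have e : F12 x1 x = 0 := by simp only [hF12, if_pos h.le]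
      rw [e]
      apply (hasDerivAt_const x (0 : ℝ)).congr_of_eventuallyEq
      filter_upwards [gt_mem_nhds h] with t ht using hF1low x1 h1 t ht.le
    · have hx0 : 0 < x := hk0.trans h
      have hder := ((hψd _ (hd x h hxS.2)).comp x (hI2 x1 x hx0)).div (hasDerivAt_id x) hx0.ne'
      have e : F12 x1 x = (χ (I x1 x) * ((x - x1 - b) / x ^ 2) * x - ψ (I x1 x) * 1) / x ^ 2 := by
        simp only [hF12, if_neg (not_le.2 h)]
        field_simp
      rw [e]
      apply hder.congr_of_eventuallyEq
      filter_upwards [lt_mem_nhds h] with t ht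
      simp [hF1, max_eq_left (le_of_lt ht)]
  · intro x1 h1 a c ha hc
    obtain ⟨d, hd⟩ := hexc x1 h1
    refine ftc_aux2 (fun t => F2 x1 t) (fun t => F22 x1 t) (hF2c x1) {k, d} a c ?_
      (fun x _ => (hnn x1 h1 x).2.2)
    intro x _ hxS
    simp only [Finset.mem_insert, Finset.mem_singleton, not_or] at hxS
    rcases lt_or_gt_of_ne hxS.1 with h | h
    · have e : F22 x1 x = 0 := by simp only [hF22, if_pos h.le]
      rw [e]
      apply (hasDerivAt_const x (0 : ℝ)).congr_of_eventuallyEq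
      filter_upwards [gt_mem_nhds h] with t ht using hF2low x1 h1 t ht.le
    · have hx0 : 0 < x := hk0.trans h
      have hder := (((hasDerivAt_const x k).div (hasDerivAt_id x) hx0.ne').const_sub 1).add
        (((hψd _ (hd x h hxS.2)).comp x (hI2 x1 x hx0)).mul (hI22 x1 x hx0))
      have e : F22 x1 x = -((0 * x - k * 1) / x ^ 2) +
          (χ (I x1 x) * ((x - x1 - b) / x ^ 2) * ((x - x1 - b) / x ^ 2) +
            ψ (I x1 x) * ((2 * (x1 + b) - x) / x ^ 3)) := by
        simp only [hF22, if_neg (not_le.2 h)]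
        ring
      rw [e]
      apply hder.congr_of_eventuallyEq
      filter_upwards [lt_mem_nhds h] with t ht
      simp [hF2, max_eq_left (le_of_lt ht)]
  · intro x1 h1 x2 h2
    rcases le_or_gt x2 k with h | h
    · rw [hF1low x1 h1 x2 h, hF2low x1 h1 x2 h, max_eq_right (by linarith)]
      ring
    · have hx0 : 0 < x2 := hk0.trans h
      simp only [hF1, hF2, max_eq_left h.le]
      rw [max_eq_left (by linarith)]
      field_simp
      ring
  · intro x2 h2
    rcases le_or_gt x2 k with h | h
    · rw [hF1low 0 le_rfl x2 h, hF2low 0 le_rfl x2 h]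
    · have hx0 : 0 < x2 := hk0.trans h
      have hIM : M (I 0 x2) = x2 := by
        have : I 0 x2 = Real.log x2 + b / x2 := by simp only [hI]; ring
        rw [this, hMG x2 h.le]
      simp only [hF1, hF2, max_eq_left h.le, hψdef, hIM]
      field_simp
      ring
  · intro x1 h1 x2 h2
    exact hnn x1 h1 x2
  · intro x1 h1 x2 h2 h
    constructor
    · simp only [hF11, max_eq_right h, hχ0 _ (hIk x1 h1), zero_div]
    · simp only [hF22, if_pos h]
  · intro x1 h1 x2 h2
    have hx0 : 0 < x2 := hk0.trans_le h2
    constructor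
    · simp only [hF11, max_eq_left h2]
      rcases le_or_gt (I x1 x2) s0 with hs | hs
      · rw [hχ0 _ hs, zero_div]; positivity
      · simp only [hχdef, if_neg (not_le.2 hs)]
        exact alg_f11 b k x2 _ hb hk (hMk _) (hMI x1 h1 x2 h2)
    · simp only [hF22]
      split_ifs with h
      · positivity
      · rcases le_or_gt (I x1 x2) s0 with hs | hs
        · rw [hχ0 _ hs, hψ0 _ hs, zero_mul, zero_mul, add_zero, add_zero]
          have t1 : k / x2 ^ 2 ≤ 1 / b := by
            rw [div_le_div_iff₀ (by positivity) hb]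
            nlinarith
          have h3 : 0 ≤ 1 / b * (k / (k - b)) := by positivity
          have h4 : 0 < 1 / b := by positivity
          nlinarith
        · simp only [hχdef, if_neg (not_le.2 hs)]
          exact alg_f22_le b k x1 x2 _ hb hk h1 (hMk _) (hMI x1 h1 x2 h2) (hM1 _ hs).2.1

end helpers

/-- Lemma `cor:derivs`.  Fix `n ≥ 1`, `β > 0` and `κ > β`, and let
`h(x) = max(x₂ - κ/√n, 0)`.  There is a solution `f` of the fluid PDE for `h` on
`Ω = (-∞,0] × [0,∞)` with absolutely continuous first-order partial derivatives:
`f1, f2` are the (one-sided at the boundary) partial derivatives of `f`, and the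
second-order weak derivatives `f11, f12, f22` (given by the integral representations
along coordinate segments of `Ω`) satisfy (i) nonnegativity on `Ω`, (ii) `f11 = f22 = 0`
for `x₂ ∈ [0, κ/√n]`, and (iii) the stated upper bounds for `x₂ ≥ κ/√n`. -/
theorem stmt4 (n : ℕ) (hn : 1 ≤ n) (β κ : ℝ) (hβ : 0 < β) (hκ : β < κ) :
    ∃ f f1 f2 f11 f12 f22 : ℝ → ℝ → ℝ,
      -- f1, f2 are the first-order (one-sided) partial derivatives of f on Ω
      (∀ x1 ≤ (0 : ℝ), ∀ x2 : ℝ, 0 ≤ x2 →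
        HasDerivWithinAt (fun t => f t x2) (f1 x1 x2) (Set.Iic 0) x1 ∧
          HasDerivWithinAt (fun t => f x1 t) (f2 x1 x2) (Set.Ici 0) x2) ∧
      -- f1 is absolutely continuous in x1 with weak derivative f11
      (∀ x2 : ℝ, 0 ≤ x2 → ∀ a ≤ (0 : ℝ), ∀ b ≤ (0 : ℝ),
        IntervalIntegrable (fun u => f11 u x2) volume a b ∧
          f1 b x2 - f1 a x2 = ∫ u in a..b, f11 u x2) ∧
      -- f1 is absolutely continuous in x2 with weak derivative f12
      (∀ x1 ≤ (0 : ℝ), ∀ a b : ℝ, 0 ≤ a → 0 ≤ b →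
        IntervalIntegrable (fun u => f12 x1 u) volume a b ∧
          f1 x1 b - f1 x1 a = ∫ u in a..b, f12 x1 u) ∧
      -- f2 is absolutely continuous in x2 with weak derivative f22
      (∀ x1 ≤ (0 : ℝ), ∀ a b : ℝ, 0 ≤ a → 0 ≤ b →
        IntervalIntegrable (fun u => f22 x1 u) volume a b ∧
          f2 x1 b - f2 x1 a = ∫ u in a..b, f22 x1 u) ∧
      -- f solves the fluid PDE for h(x) = max(x2 - κ/√n, 0)
      (∀ x1 ≤ (0 : ℝ), ∀ x2 : ℝ, 0 ≤ x2 →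
        (-x1 + x2 - β / Real.sqrt n) * f1 x1 x2 - x2 * f2 x1 x2 =
          -max (x2 - κ / Real.sqrt n) 0) ∧
      (∀ x2 : ℝ, 0 ≤ x2 → f1 0 x2 = f2 0 x2) ∧
      -- (i) nonnegativity of the second-order weak derivatives on Ω
      (∀ x1 ≤ (0 : ℝ), ∀ x2 : ℝ, 0 ≤ x2 →
        0 ≤ f11 x1 x2 ∧ 0 ≤ f12 x1 x2 ∧ 0 ≤ f22 x1 x2) ∧
      -- (ii) vanishing for x2 ∈ [0, κ/√n]
      (∀ x1 ≤ (0 : ℝ), ∀ x2 : ℝ, 0 ≤ x2 → x2 ≤ κ / Real.sqrt n →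
        f11 x1 x2 = 0 ∧ f22 x1 x2 = 0) ∧
      -- (iii) upper bounds for x2 ≥ κ/√n
      (∀ x1 ≤ (0 : ℝ), ∀ x2 : ℝ, κ / Real.sqrt n ≤ x2 →
        f11 x1 x2 ≤ Real.sqrt n / β * (κ / (κ - β) + 1) ∧
          f22 x1 x2 ≤ Real.sqrt n / β * (5 + 2 * κ / (κ - β))) := by
  have hn' : 0 < Real.sqrt n := Real.sqrt_pos.2 (by exact_mod_cast hn)
  have hb : 0 < β / Real.sqrt n := by positivity
  have hk : β / Real.sqrt n < κ / Real.sqrt n := by gcongr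
  have hkb : κ - β ≠ 0 := by linarith
  have e1 : 1 / (β / Real.sqrt n) = Real.sqrt n / β := by rw [one_div_div]
  have e2 : κ / Real.sqrt n / (κ / Real.sqrt n - β / Real.sqrt n) = κ / (κ - β) := by
    rw [← sub_div, div_div_div_cancel_right₀ hn'.ne']
  have h := core (β / Real.sqrt n) (κ / Real.sqrt n) hb hk
  rw [e1, e2, ← mul_div_assoc] at h
  exact h
end

section
/- Fix κ ≥ β and x_1 ≤ 0. The nonlinear system −β/√n + (x_1 + β/√n)e^{−η} + η ν e^{−η} = 0, ν e^{−η} = κ/√n, ν ≥ κ/√n, η ≥ 0 has exactly one solution (ν, η). -/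
theorem aux_mono (b k x : ℝ) (hb : 0 < b) (hk : b ≤ k) (hx : x ≤ 0) (s t : ℝ) (hs : 0 ≤ s)
    (hst : s < t) :
    -b + (x + b) * Real.exp (-s) + k * s < -b + (x + b) * Real.exp (-t) + k * t := by
  have h1 : -(t - s) + 1 < Real.exp (-(t - s)) :=
    Real.add_one_lt_exp (by linarith)
  have h2 : Real.exp (-t) = Real.exp (-s) * Real.exp (-(t - s)) := by
    rw [← Real.exp_add]; congr 1; ring
  have h3 : Real.exp (-s) ≤ 1 := Real.exp_le_one_iff.2 (by linarith)
  have h4 : 0 < Real.exp (-s) := Real.exp_pos _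
  have h5 : Real.exp (-t) < Real.exp (-s) := Real.exp_lt_exp.2 (by linarith)
  have h6 : Real.exp (-s) - Real.exp (-t) < t - s := by
    rw [h2]; nlinarith
  nlinarith

theorem aux_exists (b k x : ℝ) (hb : 0 < b) (hk : b ≤ k) (hx : x ≤ 0) :
    ∃ t : ℝ, 0 ≤ t ∧ -b + (x + b) * Real.exp (-t) + k * t = 0 := by
  have hk0 : 0 < k := by linarith
  have hT : 0 ≤ (b + |x + b|) / k := by positivity
  have hc : ContinuousOn (fun t : ℝ => -b + (x + b) * Real.exp (-t) + k * t)
      (Set.Icc 0 ((b + |x + b|) / k)) := by fun_prop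
  have h := intermediate_value_Icc hT hc
  obtain ⟨t, ht, h0⟩ := h (show (0 : ℝ) ∈ _ from by
    constructor
    · simpa using hx
    · have h1 : Real.exp (-((b + |x + b|) / k)) ≤ 1 := Real.exp_le_one_iff.2 (by linarith)
      have h2 := Real.exp_pos (-((b + |x + b|) / k))
      have h3 : k * ((b + |x + b|) / k) = b + |x + b| := by field_simp
      have h4 := neg_abs_le (x + b)
      have h5 := abs_nonneg (x + b)
      simp only [h3]
      nlinarith)
  exact ⟨t, ht.1, h0⟩

/-- Lemma `gamma`, first claim.  Fix `n ≥ 1`, `β > 0`, `κ ≥ β` and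
`x₁ ≤ 0`.  The nonlinear system
`-β/√n + (x₁ + β/√n)e^{-η} + η ν e^{-η} = 0`, `ν e^{-η} = κ/√n`,
`ν ≥ κ/√n`, `η ≥ 0` has exactly one solution `(ν, η)`. -/
theorem stmt5 (n : ℕ) (hn : 1 ≤ n) (β κ : ℝ) (hβ : 0 < β) (hκ : β ≤ κ)
    (x1 : ℝ) (hx1 : x1 ≤ 0) :
    ∃! p : ℝ × ℝ,
      κ / Real.sqrt n ≤ p.1 ∧ 0 ≤ p.2 ∧
        -(β / Real.sqrt n) + (x1 + β / Real.sqrt n) * Real.exp (-p.2) +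
            p.2 * p.1 * Real.exp (-p.2) = 0 ∧
        p.1 * Real.exp (-p.2) = κ / Real.sqrt n := by
  have hn0 : 0 < Real.sqrt n := Real.sqrt_pos.2 (by exact_mod_cast hn)
  have hb : 0 < β / Real.sqrt n := by positivity
  have hk : β / Real.sqrt n ≤ κ / Real.sqrt n := by gcongr
  generalize β / Real.sqrt n = b at *
  generalize κ / Real.sqrt n = k at *
  obtain ⟨t, ht, h0⟩ := aux_exists b k x1 hb hk hx1
  have he : Real.exp t * Real.exp (-t) = 1 := by rw [← Real.exp_add]; simp
  refine ⟨(k * Real.exp t, t), ⟨?_, ht, ?_, ?_⟩, ?_⟩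
  · have := Real.one_le_exp ht
    show k ≤ k * Real.exp t
    nlinarith
  · show -b + (x1 + b) * Real.exp (-t) + t * (k * Real.exp t) * Real.exp (-t) = 0
    linear_combination h0 + t * k * he
  · show k * Real.exp t * Real.exp (-t) = k
    linear_combination k * he
  · rintro ⟨v, s⟩ ⟨_, hs, h1, h2⟩
    simp only at hs h1 h2
    have h3 : -b + (x1 + b) * Real.exp (-s) + k * s = 0 := by
      linear_combination h1 - s * h2
    have hst : s = t := by
      rcases lt_trichotomy s t with h | h | h
      · have := aux_mono b k x1 hb hk hx1 s t hs h
        linarith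
      · exact h
      · have := aux_mono b k x1 hb hk hx1 t s ht h
        linarith
    subst hst
    have hv : v = k * Real.exp s := by
      linear_combination Real.exp s * h2 - v * he
    rw [hv]
end

section
/- For every x_1 ≤ 0 and every t ∈ [0, η*(x_1)], the point (−β/√n + (x_1 + β/√n)e^{−t} + t·ν*(x_1)·e^{−t}, ν*(x_1)·e^{−t}) lies on the curve Γ^(κ); equivalently, its second coordinate equals ν* evaluated at its first coordinate. -/
/-- `(ν, η)` solves the nonlinear system of Lemma `gamma` for initial value `x₁`. -/
def GammaSol (n : ℕ) (β κ x1 ν η : ℝ) : Prop :=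
  κ / Real.sqrt n ≤ ν ∧ 0 ≤ η ∧
    -(β / Real.sqrt n) + (x1 + β / Real.sqrt n) * Real.exp (-η) +
        η * ν * Real.exp (-η) = 0 ∧
    ν * Real.exp (-η) = κ / Real.sqrt n

theorem gamma_aux (b k s u : ℝ) (hb : 0 < b) (hk : b ≤ k) (hs : 0 ≤ s) (hsu : s < u)
    (h : (b - u * k) * Real.exp u = (b - s * k) * Real.exp s) : False := by
  have h1 : Real.exp s = Real.exp u * Real.exp (-(u - s)) := by
    rw [← Real.exp_add]; congr 1; ring
  have h2 : b - u * k = (b - s * k) * Real.exp (-(u - s)) := by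
    have hu := Real.exp_pos u
    rw [h1] at h
    apply mul_right_cancel₀ hu.ne'
    linarith
  have h3 : -(u - s) + 1 < Real.exp (-(u - s)) := Real.add_one_lt_exp (by linarith)
  have h4 : Real.exp (-(u - s)) ≤ 1 := Real.exp_le_one_iff.2 (by linarith)
  have h5 : 0 ≤ s * k := mul_nonneg hs (by linarith)
  have h6 : (b - s * k) * (1 - Real.exp (-(u - s))) ≤ k * (1 - Real.exp (-(u - s))) :=
    mul_le_mul_of_nonneg_right (by linarith) (by linarith)
  have h7 : k * (1 - Real.exp (-(u - s))) < k * (u - s) :=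
    mul_lt_mul_of_pos_left (by linarith) (by linarith)
  nlinarith

/-- Lemma `gamma`, second claim.  Let `(ν*(x₁), η*(x₁))` denote the
(unique) solution of the nonlinear system for each `x₁ ≤ 0`.  Then for every `x₁ ≤ 0`
and every `t ∈ [0, η*(x₁)]`, the point
`(-β/√n + (x₁ + β/√n)e^{-t} + t ν*(x₁) e^{-t}, ν*(x₁) e^{-t})`
lies on the curve `Γ^{(κ)} = {x ∈ Ω : x₂ = ν*(x₁)}`: it belongs to `Ω` and its second
coordinate equals `ν*` evaluated at its first coordinate. -/
theorem stmt6 (n : ℕ) (hn : 1 ≤ n) (β κ : ℝ) (hβ : 0 < β) (hκ : β ≤ κ)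
    (νs ηs : ℝ → ℝ)
    (hsol : ∀ x1 ≤ (0 : ℝ), GammaSol n β κ x1 (νs x1) (ηs x1)) :
    ∀ x1 ≤ (0 : ℝ), ∀ t ∈ Set.Icc (0 : ℝ) (ηs x1),
      (-(β / Real.sqrt n) + (x1 + β / Real.sqrt n) * Real.exp (-t) +
          t * νs x1 * Real.exp (-t)) ≤ 0 ∧
      0 ≤ νs x1 * Real.exp (-t) ∧
      νs x1 * Real.exp (-t) =
        νs (-(β / Real.sqrt n) + (x1 + β / Real.sqrt n) * Real.exp (-t) +
          t * νs x1 * Real.exp (-t)) := by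
  intro x1 hx t ht
  obtain ⟨ht0, ht1⟩ := ht
  have hn' : 0 < Real.sqrt n := Real.sqrt_pos.2 (by exact_mod_cast hn)
  have hb : 0 < β / Real.sqrt n := div_pos hβ hn'
  have hbk : β / Real.sqrt n ≤ κ / Real.sqrt n := div_le_div_of_nonneg_right hκ hn'.le
  unfold GammaSol at hsol
  generalize β / Real.sqrt n = b at *
  generalize κ / Real.sqrt n = k at *
  have key : ∀ y ≤ (0 : ℝ), νs y = k * Real.exp (ηs y) ∧
      y = -b + (b - ηs y * k) * Real.exp (ηs y) ∧ 0 ≤ ηs y := by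
    intro y hy
    obtain ⟨_, h0, h1, h2⟩ := hsol y hy
    have he : Real.exp (-ηs y) * Real.exp (ηs y) = 1 := by
      rw [← Real.exp_add]; simp
    refine ⟨?_, ?_, h0⟩
    · linear_combination Real.exp (ηs y) * h2 - νs y * he
    · linear_combination Real.exp (ηs y) * h1 - (y + b) * he - ηs y * Real.exp (ηs y) * h2
  obtain ⟨e1, e2, e3⟩ := key x1 hx
  have hes : Real.exp (ηs x1 - t) = Real.exp (ηs x1) * Real.exp (-t) := by
    rw [← Real.exp_add]; congr 1
  have hnu : νs x1 * Real.exp (-t) = k * Real.exp (ηs x1 - t) := by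
    rw [hes, e1]; ring
  have hy : -b + (x1 + b) * Real.exp (-t) + t * νs x1 * Real.exp (-t)
      = -b + (b - (ηs x1 - t) * k) * Real.exp (ηs x1 - t) := by
    rw [hes]
    linear_combination Real.exp (-t) * e2 + t * Real.exp (-t) * e1
  rw [hy, hnu]
  generalize hs : ηs x1 - t = s at *
  have hs0 : 0 ≤ s := by linarith
  have hy0 : -b + (b - s * k) * Real.exp s ≤ 0 := by
    have h1 : -s + 1 ≤ Real.exp (-s) := Real.add_one_le_exp _
    have h2 : b - s * k ≤ b * Real.exp (-s) := by nlinarith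
    have h3 := mul_le_mul_of_nonneg_right h2 (Real.exp_pos s).le
    have he : Real.exp (-s) * Real.exp s = 1 := by
      rw [← Real.exp_add]; simp
    rw [mul_assoc, he] at h3
    linarith
  refine ⟨hy0, mul_nonneg (by linarith) (Real.exp_pos s).le, ?_⟩
  obtain ⟨f1, f2, f3⟩ := key _ hy0
  generalize νs (-b + (b - s * k) * Real.exp s) = v at *
  generalize ηs (-b + (b - s * k) * Real.exp s) = u at *
  have hu : u = s := by
    rcases lt_trichotomy u s with h | h | h
    · exact (gamma_aux b k u s hb hbk f3 h (by linarith)).elim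
    · exact h
    · exact (gamma_aux b k s u hb hbk hs0 h (by linarith)).elim
  rw [f1, hu]
end

section
/- Fix κ ≥ β. If x ∈ Ω satisfies x > Γ^(κ), then τ(x) < ∞ and x_2·e^{−τ(x)} > κ/√n; and if x ∈ Γ^(κ), then τ(x) < ∞ and x_2·e^{−τ(x)} = κ/√n. -/
/-- `η` solves the hitting-time equation `β/√n - (x₁ + β/√n)e^{-η} - η x₂ e^{-η} = 0`. -/
def HitEq (n : ℕ) (β x1 x2 η : ℝ) : Prop :=
  β / Real.sqrt n - (x1 + β / Real.sqrt n) * Real.exp (-η) -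
      η * x2 * Real.exp (-η) = 0

theorem hitEq_iff (n : ℕ) (β x1 x2 η : ℝ) : HitEq n β x1 x2 η ↔
    β / Real.sqrt n * Real.exp η - (x1 + β / Real.sqrt n) - η * x2 = 0 := by
  unfold HitEq
  have h : Real.exp η * Real.exp (-η) = 1 := by rw [← Real.exp_add]; simp
  have e : β / Real.sqrt n - (x1 + β / Real.sqrt n) * Real.exp (-η) - η * x2 * Real.exp (-η)
      = (β / Real.sqrt n * Real.exp η - (x1 + β / Real.sqrt n) - η * x2) * Real.exp (-η) := by
    linear_combination (-(β / Real.sqrt n)) * h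
  rw [e, mul_eq_zero, or_iff_left (Real.exp_pos _).ne']

theorem hitEq_min (n : ℕ) (β x1 x2 η η' : ℝ) (hb : 0 < β / Real.sqrt n)
    (h : HitEq n β x1 x2 η) (h' : HitEq n β x1 x2 η')
    (hk : β / Real.sqrt n ≤ x2 * Real.exp (-η)) : η ≤ η' := by
  rw [hitEq_iff] at h h'
  by_contra! hlt
  generalize β / Real.sqrt n = b at *
  have hE := Real.exp_pos η
  have e0 : Real.exp η * Real.exp (-η) = 1 := by rw [← Real.exp_add]; simp
  have e1 : Real.exp η' = Real.exp η * Real.exp (η' - η) := by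
    rw [← Real.exp_add]; congr 1; ring
  have e2 := Real.add_one_lt_exp (x := η' - η) (by linarith [hlt] : η' - η < 0).ne
  have hx : b * Real.exp η ≤ x2 := by
    calc b * Real.exp η ≤ x2 * Real.exp (-η) * Real.exp η := by gcongr
      _ = x2 := by linear_combination x2 * e0
  have h3 := mul_lt_mul_of_pos_left e2 (mul_pos hb hE)
  have h4 := mul_le_mul_of_nonneg_left hx (sub_nonneg.2 hlt.le)
  rw [e1] at h'
  nlinarith

/-- Lemma `tau`, part 1.  Fix `κ ≥ β` and let `ν*` parametrize the curve
`Γ^{(κ)}`.  For `x ∈ Ω`: if `x > Γ^{(κ)}` (i.e. `x₂ > ν*(x₁)`) then `τ(x) < ∞` — the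
smallest nonnegative solution `η` of the hitting-time equation exists — and
`x₂ e^{-τ(x)} > κ/√n`; and if `x ∈ Γ^{(κ)}` (i.e. `x₂ = ν*(x₁)`) then `τ(x) < ∞` and
`x₂ e^{-τ(x)} = κ/√n`. -/
theorem stmt7 (n : ℕ) (hn : 1 ≤ n) (β κ : ℝ) (hβ : 0 < β) (hκ : β ≤ κ)
    (νs : ℝ → ℝ)
    (hνs : ∀ x1 ≤ (0 : ℝ), ∃ η : ℝ, GammaSol n β κ x1 (νs x1) η) :
    ∀ x1 ≤ (0 : ℝ), ∀ x2 : ℝ, 0 ≤ x2 →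
      (νs x1 < x2 →
        ∃ η : ℝ, 0 ≤ η ∧ HitEq n β x1 x2 η ∧
          (∀ η' : ℝ, 0 ≤ η' → HitEq n β x1 x2 η' → η ≤ η') ∧
          κ / Real.sqrt n < x2 * Real.exp (-η)) ∧
      (x2 = νs x1 →
        ∃ η : ℝ, 0 ≤ η ∧ HitEq n β x1 x2 η ∧
          (∀ η' : ℝ, 0 ≤ η' → HitEq n β x1 x2 η' → η ≤ η') ∧
          x2 * Real.exp (-η) = κ / Real.sqrt n) := by
  intro x1 hx1 x2 hx2
  have hs : 0 < Real.sqrt n := Real.sqrt_pos.2 (by exact_mod_cast hn)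
  have hb : 0 < β / Real.sqrt n := div_pos hβ hs
  have hbk : β / Real.sqrt n ≤ κ / Real.sqrt n := by gcongr
  obtain ⟨η0, h1, h0, h2, h3⟩ := hνs x1 hx1
  have hν : HitEq n β x1 (νs x1) η0 := by
    unfold HitEq; linarith
  constructor
  · intro hlt
    have hg := (hitEq_iff n β x1 (νs x1) η0).1 hν
    have hc : ContinuousOn (fun η : ℝ => β / Real.sqrt n * Real.exp η -
        (x1 + β / Real.sqrt n) - η * x2) (Set.Icc 0 η0) := by fun_prop
    have hmem : (0 : ℝ) ∈ Set.Icc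
        ((fun η : ℝ => β / Real.sqrt n * Real.exp η -
          (x1 + β / Real.sqrt n) - η * x2) η0)
        ((fun η : ℝ => β / Real.sqrt n * Real.exp η -
          (x1 + β / Real.sqrt n) - η * x2) 0) := by
      constructor
      · have := mul_le_mul_of_nonneg_left hlt.le h0
        simp only
        linarith
      · simp only [Real.exp_zero]
        linarith
    obtain ⟨η, ⟨ha, hb'⟩, he⟩ := intermediate_value_Icc' h0 hc hmem
    have hη : HitEq n β x1 x2 η := (hitEq_iff n β x1 x2 η).2 he
    have hk : κ / Real.sqrt n < x2 * Real.exp (-η) := by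
      calc κ / Real.sqrt n = νs x1 * Real.exp (-η0) := h3.symm
        _ < x2 * Real.exp (-η0) := by gcongr
        _ ≤ x2 * Real.exp (-η) := by gcongr
    exact ⟨η, ha, hη, fun η' _ h' => hitEq_min n β x1 x2 η η' hb hη h' (hbk.trans hk.le), hk⟩
  · rintro rfl
    exact ⟨η0, h0, hν, fun η' _ h' =>
      hitEq_min n β x1 _ η0 η' hb hν h' (hbk.trans h3.ge), h3⟩
end

section
/- Fix κ_1 and κ_2 with β < κ_1 < κ_2. If x ∈ Ω satisfies x ≥ Γ^(κ_2), then x > Γ^(κ_1); that is, the curve Γ^(κ_2) lies strictly above the curve Γ^(κ_1). -/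
/-- Lemma `tau`, part 3.  Fix `β < κ₁ < κ₂` and let `ν*_{κ₁}`, `ν*_{κ₂}`
parametrize the curves `Γ^{(κ₁)}`, `Γ^{(κ₂)}`.  If `x ∈ Ω` satisfies `x ≥ Γ^{(κ₂)}`
(i.e. `x₂ ≥ ν*_{κ₂}(x₁)`) then `x > Γ^{(κ₁)}` (i.e. `x₂ > ν*_{κ₁}(x₁)`): the curve
`Γ^{(κ₂)}` lies strictly above `Γ^{(κ₁)}`. -/
theorem stmt9 (n : ℕ) (hn : 1 ≤ n) (β κ1 κ2 : ℝ) (hβ : 0 < β)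
    (hκ1 : β < κ1) (hκ12 : κ1 < κ2)
    (νs1 νs2 : ℝ → ℝ)
    (hνs1 : ∀ x1 ≤ (0 : ℝ), ∃ η : ℝ, GammaSol n β κ1 x1 (νs1 x1) η)
    (hνs2 : ∀ x1 ≤ (0 : ℝ), ∃ η : ℝ, GammaSol n β κ2 x1 (νs2 x1) η) :
    ∀ x1 ≤ (0 : ℝ), ∀ x2 : ℝ, 0 ≤ x2 → νs2 x1 ≤ x2 → νs1 x1 < x2 := by
  intro x1 hx1 x2 _ hx2
  refine lt_of_lt_of_le ?_ hx2
  obtain ⟨η1, hk1, he1, ha1, hb1⟩ := hνs1 x1 hx1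
  obtain ⟨η2, hk2, he2, ha2, hb2⟩ := hνs2 x1 hx1
  have hs : 0 < Real.sqrt n := Real.sqrt_pos.mpr (by exact_mod_cast hn)
  have hb : 0 < β / Real.sqrt n := div_pos hβ hs
  have hbk : β / Real.sqrt n < κ1 / Real.sqrt n := div_lt_div_of_pos_right hκ1 hs
  have hkk : κ1 / Real.sqrt n < κ2 / Real.sqrt n := div_lt_div_of_pos_right hκ12 hs
  generalize β / Real.sqrt n = b at *
  generalize κ1 / Real.sqrt n = k1 at *
  generalize κ2 / Real.sqrt n = k2 at *
  generalize νs1 x1 = v1 at *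
  generalize νs2 x1 = v2 at *
  have inv1 : Real.exp (-η1) * Real.exp η1 = 1 := by rw [← Real.exp_add]; simp
  have inv2 : Real.exp (-η2) * Real.exp η2 = 1 := by rw [← Real.exp_add]; simp
  have c1 : η1 * v1 = b * (Real.exp η1 - 1) - x1 := by
    linear_combination Real.exp η1 * ha1 - (x1 + b + η1 * v1) * inv1
  have c2 : η2 * v2 = b * (Real.exp η2 - 1) - x1 := by
    linear_combination Real.exp η2 * ha2 - (x1 + b + η2 * v2) * inv2
  have d1 : v1 = k1 * Real.exp η1 := by
    linear_combination Real.exp η1 * hb1 - v1 * inv1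
  by_contra! hcon
  have p1 := Real.exp_pos η1
  have hη : η2 < η1 := by
    by_contra! h
    have h1 : Real.exp (-η2) ≤ Real.exp (-η1) := Real.exp_le_exp.mpr (by linarith)
    have h2 : v2 * Real.exp (-η2) ≤ v1 * Real.exp (-η1) :=
      mul_le_mul hcon h1 (Real.exp_pos _).le (by linarith)
    linarith
  have e1 : Real.exp η1 - Real.exp η2 ≤ Real.exp η1 * (η1 - η2) := by
    have h1 := Real.add_one_le_exp (η2 - η1)
    have h2 : Real.exp η2 = Real.exp η1 * Real.exp (η2 - η1) := by
      rw [← Real.exp_add]; congr 1; ring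
    rw [h2]
    nlinarith
  have f1 : b * (Real.exp η1 - Real.exp η2) ≤ b * (Real.exp η1 * (η1 - η2)) :=
    mul_le_mul_of_nonneg_left e1 hb.le
  have f2 : b * (Real.exp η1 * (η1 - η2)) < k1 * (Real.exp η1 * (η1 - η2)) :=
    mul_lt_mul_of_pos_right hbk (mul_pos p1 (by linarith))
  have f3 : k1 * (Real.exp η1 * (η1 - η2)) = v1 * η1 - v1 * η2 := by rw [d1]; ring
  have f4 : η2 * v2 ≤ η2 * v1 := mul_le_mul_of_nonneg_left hcon he2
  linarith
end

section
/- Fix κ > β. The function f defined piecewise by f(x) = 0 if x_2 ∈ [0, κ/√n]; f(x) = x_2 − κ/√n − (κ/√n)·log(√n·x_2/κ) if x ≤ Γ^(κ) and x_2 ≥ κ/√n; f(x) = x_2·(1 − e^{−τ(x)}) − (κ/√n)·τ(x) + (1/2)·(√n/β)·(x_2·e^{−τ(x)} − κ/√n)² if x ≥ Γ^(κ), is well-defined on Ω (the pieces agree where the regions overlap) and has absolutely continuous first-order partial derivatives. Moreover, when x ≤ Γ^(κ) and x_2 ≥ κ/√n: f_1(x) = 0, f_2(x) = 1 − κ/(x_2·√n),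 and f_{22}(x) = (1/x_2²)·(κ/√n); and when x ≥ Γ^(κ): f_1(x) = (√n/β)·e^{−τ(x)}·(x_2·e^{−τ(x)} − κ/√n) and f_2(x) = 1 − (1/x_2)·(κ/√n) + (√n/β)·(x_2·e^{−τ(x)} − κ/√n)·((x_2·e^{−τ(x)} − β/√n)/x_2 + τ(x)·e^{−τ(x)}). -/
open MeasureTheory

section
open Set Filter Topology

def PInt (g F : ℝ → ℝ) (a b : ℝ) : Prop :=
  IntervalIntegrable g volume a b ∧ F b - F a = ∫ u in a..b, g u

lemma PInt.symm {g F : ℝ → ℝ} {a b : ℝ} (h : PInt g F a b) : PInt g F b a := by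
  refine ⟨h.1.symm, ?_⟩
  rw [intervalIntegral.integral_symm, ← h.2]; ring

lemma PInt.trans {g F : ℝ → ℝ} {a b c : ℝ} (h : PInt g F a b) (h' : PInt g F b c) :
    PInt g F a c := by
  refine ⟨h.1.trans h'.1, ?_⟩
  rw [← intervalIntegral.integral_add_adjacent_intervals h.1 h'.1, ← h.2, ← h'.2]; ring

lemma PInt.piece {g F F0 : ℝ → ℝ} {a b : ℝ} (hab : a ≤ b)
    (hAC : AbsolutelyContinuousOnInterval F0 a b) (hF : ∀ u ∈ Icc a b, F u = F0 u)
    (hg : ∀ u ∈ Ioo a b, g u = deriv F u) : PInt g F a b := by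
  have h1 : ∀ u ∈ Ioo a b, deriv F0 u = g u := by
    intro u hu
    rw [hg u hu]
    apply Filter.EventuallyEq.deriv_eq
    filter_upwards [Icc_mem_nhds hu.1 hu.2] with v hv
    exact (hF v hv).symm
  refine ⟨hAC.intervalIntegrable_deriv.congr_uIoo ?_, ?_⟩
  · rw [uIoo_of_le hab]; exact h1
  · rw [hF a ⟨le_rfl, hab⟩, hF b ⟨hab, le_rfl⟩, ← hAC.integral_deriv_eq_sub]
    exact intervalIntegral.integral_congr_Ioo_of_le hab h1

lemma glue {F : ℝ → ℝ} {F' t : ℝ} {A B : Set ℝ} (hA : IsClosed A) (hB : IsClosed B)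
    (h1 : t ∈ A → HasDerivWithinAt F F' A t) (h2 : t ∈ B → HasDerivWithinAt F F' B t) :
    HasDerivWithinAt F F' (A ∪ B) t := by
  apply HasDerivWithinAt.union
  · by_cases h : t ∈ A
    · exact h1 h
    · exact HasFDerivWithinAt.of_notMem_closure (by rwa [hA.closure_eq])
  · by_cases h : t ∈ B
    · exact h2 h
    · exact HasFDerivWithinAt.of_notMem_closure (by rwa [hB.closure_eq])

lemma inv_deriv {T φ m : ℝ → ℝ} {S : Set ℝ} {s0 c φ' : ℝ} (hs0 : s0 ∈ S)
    (hT : ContinuousWithinAt T S s0) (hm : ContinuousWithinAt m S s0)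
    (hφ : HasDerivAt φ φ' (T s0)) (h0 : φ' ≠ 0)
    (h : ∀ s ∈ S, φ (T s) = c + (s - s0) * m s) :
    HasDerivWithinAt T (m s0 / φ') S s0 := by
  rw [hasDerivWithinAt_iff_tendsto_slope]
  have hd : ContinuousAt (dslope φ (T s0)) (T s0) :=
    continuousAt_dslope_same.2 hφ.differentiableAt
  have hd' : Tendsto (fun s => dslope φ (T s0) (T s)) (𝓝[S \ {s0}] s0) (𝓝 φ') := by
    have := (hd.tendsto.comp hT.tendsto)
    rw [dslope_same, hφ.deriv] at this
    exact this.mono_left (nhdsWithin_mono _ sdiff_subset)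
  have hm' : Tendsto m (𝓝[S \ {s0}] s0) (𝓝 (m s0)) :=
    hm.tendsto.mono_left (nhdsWithin_mono _ sdiff_subset)
  refine (hm'.div hd' h0).congr' ?_
  have hne : ∀ᶠ s in 𝓝[S \ {s0}] s0, dslope φ (T s0) (T s) ≠ 0 := hd'.eventually_ne h0
  filter_upwards [hne, self_mem_nhdsWithin] with s hs hs'
  have e := sub_smul_dslope φ (T s0) (T s)
  have e1 := h s hs'.1
  have e2 := h s0 hs0
  have hss : s - s0 ≠ 0 := sub_ne_zero.2 hs'.2
  simp only [smul_eq_mul, sub_self, zero_mul, add_zero] at e e2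
  rw [slope_def_field]
  simp only [Pi.div_apply]
  rw [div_eq_div_iff hs hss, e]
  rw [e1, e2]; ring

lemma key_s10 {b k y s t : ℝ} (hb : 0 < b) (hbk : b < k) (hy : k ≤ y)
    (hs : k * Real.exp s ≤ y) (ht : k * Real.exp t ≤ y) :
    (k - b) * |s - t| ≤ |(b * Real.exp s - y * s) - (b * Real.exp t - y * t)| := by
  wlog hst : s ≤ t generalizing s t
  · have := this ht hs (le_of_not_ge hst)
    rwa [abs_sub_comm, abs_sub_comm (b * Real.exp s - y * s)]
  rw [abs_sub_comm, abs_of_nonneg (sub_nonneg.2 hst)]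
  refine le_trans ?_ (le_abs_self _)
  have h1 : Real.exp t - Real.exp s ≤ Real.exp t * (t - s) := by
    have := Real.add_one_le_exp (s - t)
    have e : Real.exp s = Real.exp t * Real.exp (s - t) := by
      rw [← Real.exp_add]; ring_nf
    rw [e]; nlinarith [Real.exp_pos t]
  have hk : 0 < k := hb.trans hbk
  have h2 : b * Real.exp t ≤ y - (k - b) := by
    have : b * (k * Real.exp t) ≤ b * y := by gcongr
    have : k * (b * Real.exp t) ≤ k * (y - (k - b)) := by nlinarith
    exact le_of_mul_le_mul_left this hk
  nlinarith [mul_le_mul_of_nonneg_left h1 hb.le, mul_le_mul_of_nonneg_right h2 (sub_nonneg.2 hst)]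

lemma key_eq {b k y s t : ℝ} (hb : 0 < b) (hbk : b < k) (hy : k ≤ y)
    (hs : k * Real.exp s ≤ y) (ht : k * Real.exp t ≤ y)
    (h : b * Real.exp s - y * s = b * Real.exp t - y * t) : s = t := by
  have := key_s10 hb hbk hy hs ht
  rw [h, sub_self, abs_zero] at this
  have h1 : |s - t| ≤ 0 := by
    by_contra hh
    nlinarith [mul_pos (sub_pos.2 hbk) (not_le.1 hh)]
  exact sub_eq_zero.1 (abs_nonpos_iff.1 h1)

lemma h_anti {b k : ℝ} (hb : 0 < b) (hbk : b < k) :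
    StrictAntiOn (fun s : ℝ => b * Real.exp s - s * (k * Real.exp s)) (Ici 0) := by
  apply strictAntiOn_of_deriv_neg (convex_Ici 0) (by fun_prop)
  intro x hx
  rw [interior_Ici, mem_Ioi] at hx
  have : HasDerivAt (fun s : ℝ => b * Real.exp s - s * (k * Real.exp s))
      (b * Real.exp x - (1 * (k * Real.exp x) + x * (k * Real.exp x))) x :=
    ((Real.hasDerivAt_exp x).const_mul b).sub
      ((hasDerivAt_id x).mul ((Real.hasDerivAt_exp x).const_mul k))
  rw [this.deriv]
  have h1 := Real.exp_pos x
  have h2 : 0 < x * (k * Real.exp x) := by have := hb.trans hbk; positivity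
  nlinarith [mul_pos (sub_pos.2 hbk) h1]

lemma exp_neg_lip {s t : ℝ} (hs : 0 ≤ s) (ht : 0 ≤ t) :
    |Real.exp (-s) - Real.exp (-t)| ≤ |s - t| := by
  wlog hst : s ≤ t generalizing s t
  · have := this ht hs (le_of_not_ge hst)
    rwa [abs_sub_comm, abs_sub_comm s]
  have h0 : Real.exp (-t) ≤ Real.exp (-s) := Real.exp_le_exp.2 (by linarith)
  rw [abs_of_nonneg (by linarith), abs_sub_comm, abs_of_nonneg (by linarith)]
  have := Real.add_one_le_exp (s - t)
  have e : Real.exp (-t) = Real.exp (-s) * Real.exp (s - t) := by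
    rw [← Real.exp_add]; ring_nf
  have h1 : Real.exp (-s) ≤ 1 := Real.exp_le_one_iff.2 (by linarith)
  rw [e]; nlinarith [Real.exp_pos (-s)]

lemma ac_of_lip {T : ℝ → ℝ} {a b C : ℝ} (hab : a ≤ b)
    (h : ∀ s ∈ Icc a b, ∀ t ∈ Icc a b, |T s - T t| ≤ C * |s - t|) :
    AbsolutelyContinuousOnInterval T a b := by
  apply LipschitzOnWith.absolutelyContinuousOnInterval (K := C.toNNReal)
  rw [uIcc_of_le hab]
  apply LipschitzOnWith.of_dist_le_mul
  intro s hs t ht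
  rw [Real.dist_eq, Real.dist_eq]
  refine (h s hs t ht).trans ?_
  gcongr
  exact Real.le_coe_toNNReal C

lemma cw_of_lip {T : ℝ → ℝ} {S : Set ℝ} {C s0 : ℝ} (hs0 : s0 ∈ S)
    (h : ∀ s ∈ S, ∀ t ∈ S, |T s - T t| ≤ C * |s - t|) : ContinuousWithinAt T S s0 := by
  have : LipschitzOnWith C.toNNReal T S := by
    apply LipschitzOnWith.of_dist_le_mul
    intro s hs t ht
    rw [Real.dist_eq, Real.dist_eq]
    refine (h s hs t ht).trans ?_
    gcongr
    exact Real.le_coe_toNNReal C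
  exact this.continuousOn s0 hs0

noncomputable def GG (b k y T : ℝ) : ℝ :=
  y * (1 - Real.exp (-T)) - k * T + 1 / 2 * (1 / b) * (y * Real.exp (-T) - k) ^ 2

noncomputable def GG1 (b k y T : ℝ) : ℝ :=
  1 / b * Real.exp (-T) * (y * Real.exp (-T) - k)

noncomputable def GG2 (b k y T : ℝ) : ℝ :=
  1 - 1 / y * k + 1 / b * (y * Real.exp (-T) - k) *
    ((y * Real.exp (-T) - b) / y + T * Real.exp (-T))

lemma GG_deriv {b k : ℝ} {Y T : ℝ → ℝ} {S : Set ℝ} {s0 Y' T' : ℝ}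
    (hY : HasDerivWithinAt Y Y' S s0) (hT : HasDerivWithinAt T T' S s0) :
    HasDerivWithinAt (fun s => GG b k (Y s) (T s))
      (Y' * (1 - Real.exp (-T s0)) + Y s0 * (Real.exp (-T s0) * T') - k * T' +
        1 / b * (Y s0 * Real.exp (-T s0) - k) *
          (Y' * Real.exp (-T s0) - Y s0 * (Real.exp (-T s0) * T'))) S s0 := by
  have he : HasDerivWithinAt (fun s => Real.exp (-T s)) (Real.exp (-T s0) * (-T')) S s0 :=
    hT.neg.exp
  have := ((hY.mul (he.const_sub 1)).sub (hT.const_mul k)).add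
    ((((hY.mul he).sub_const k).pow 2).const_mul (1 / 2 * (1 / b)))
  refine (this.congr_deriv ?_).congr_of_eventuallyEq ?_ ?_
  · simp; ring
  · exact Filter.Eventually.of_forall fun s => by simp [GG]
  · simp [GG]

lemma ac_const (c a b : ℝ) : AbsolutelyContinuousOnInterval (fun _ => c) a b :=
  LipschitzOnWith.absolutelyContinuousOnInterval (K := 0)
    (LipschitzOnWith.of_dist_le_mul (by simp))

lemma ac_id (a b : ℝ) : AbsolutelyContinuousOnInterval (fun x => x) a b :=
  LipschitzOnWith.absolutelyContinuousOnInterval (K := 1)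
    (LipschitzOnWith.of_dist_le_mul (by simp))

lemma ac_inv {a b : ℝ} (ha : 0 < a) (hab : a ≤ b) :
    AbsolutelyContinuousOnInterval (fun x => 1 / x) a b := by
  apply ac_of_lip (C := 1 / (a * a)) hab
  intro s hs t ht
  have h1 : 0 < s := ha.trans_le hs.1
  have h2 : 0 < t := ha.trans_le ht.1
  have : 1 / s - 1 / t = (1 / (s * t)) * (t - s) := by field_simp
  rw [this, abs_mul, abs_sub_comm t, abs_of_pos (by positivity)]
  gcongr
  · exact hs.1
  · exact ht.1

lemma GG1_ac {b k u v : ℝ} {Y T : ℝ → ℝ} (hY : AbsolutelyContinuousOnInterval Y u v)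
    (hE : AbsolutelyContinuousOnInterval (fun s => Real.exp (-T s)) u v) :
    AbsolutelyContinuousOnInterval (fun s => GG1 b k (Y s) (T s)) u v :=
  (hE.const_mul (1 / b)).fun_mul ((hY.fun_mul hE).fun_sub (ac_const k u v))

lemma GG2_ac {b k u v : ℝ} {T : ℝ → ℝ} (hu : 0 < u) (huv : u ≤ v)
    (hT : AbsolutelyContinuousOnInterval T u v)
    (hE : AbsolutelyContinuousOnInterval (fun s => Real.exp (-T s)) u v) :
    AbsolutelyContinuousOnInterval (fun s => GG2 b k s (T s)) u v := by
  have hi := ac_inv hu huv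
  have hs := (ac_id u v).fun_mul hE
  have := (((ac_const 1 u v).fun_sub (hi.fun_mul (ac_const k u v)))).fun_add
    (((hs.fun_sub (ac_const k u v)).const_mul (1 / b)).fun_mul
    (((hs.fun_sub (ac_const b u v)).fun_mul hi).fun_add (hT.fun_mul hE)))
  have e : (fun s => GG2 b k s (T s)) = fun s => 1 - 1 / s * k +
      1 / b * (s * Real.exp (-T s) - k) *
        ((s * Real.exp (-T s) - b) * (1 / s) + T s * Real.exp (-T s)) := by
    funext s
    unfold GG2; ring
  rw [e]
  exact this

lemma alg1 {b k y E : ℝ} (hb : b ≠ 0) (hE : E ≠ 0) (h : b * E - y ≠ 0) :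
    0 * (1 - E⁻¹) + y * (E⁻¹ * (1 / (b * E - y))) - k * (1 / (b * E - y)) +
      1 / b * (y * E⁻¹ - k) * (0 * E⁻¹ - y * (E⁻¹ * (1 / (b * E - y)))) =
    1 / b * E⁻¹ * (y * E⁻¹ - k) := by
  obtain ⟨D, hD⟩ : ∃ D, D = b * E - y := ⟨_, rfl⟩
  obtain rfl : y = b * E - D := by linarith
  rw [← hD] at h ⊢
  field_simp
  ring

lemma alg2 {b k y E t : ℝ} (hb : b ≠ 0) (hE : E ≠ 0) (hy : y ≠ 0) (h : b * E - y ≠ 0) :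
    1 * (1 - E⁻¹) + y * (E⁻¹ * (t / (b * E - y))) - k * (t / (b * E - y)) +
      1 / b * (y * E⁻¹ - k) * (1 * E⁻¹ - y * (E⁻¹ * (t / (b * E - y)))) =
    1 - 1 / y * k + 1 / b * (y * E⁻¹ - k) * ((y * E⁻¹ - b) / y + t * E⁻¹) := by
  have h1 := alg1 (k := k) hb hE h
  have h2 : 1 - E⁻¹ + 1 / b * (y * E⁻¹ - k) * E⁻¹ =
      1 - 1 / y * k + 1 / b * (y * E⁻¹ - k) * ((y * E⁻¹ - b) / y) := by
    field_simp
    ring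
  linear_combination h2 + t * h1

lemma mainAbs {b k : ℝ} (hb : 0 < b) (hbk : b < k) (νs eta : ℝ → ℝ) (tau : ℝ → ℝ → ℝ)
    (hν : ∀ x1 ≤ (0 : ℝ), 0 ≤ eta x1 ∧ νs x1 = k * Real.exp (eta x1) ∧
      b * Real.exp (eta x1) - b - eta x1 * (k * Real.exp (eta x1)) = x1)
    (hτ : ∀ x1 ≤ (0 : ℝ), ∀ x2, νs x1 ≤ x2 → 0 ≤ tau x1 x2 ∧ tau x1 x2 ≤ eta x1 ∧
      b * Real.exp (tau x1 x2) - x2 * tau x1 x2 = x1 + b) :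
    ∃ f f1 f2 f11 f12 f22 : ℝ → ℝ → ℝ,
      (∀ x1 ≤ (0 : ℝ), ∀ x2 : ℝ, 0 ≤ x2 → x2 ≤ k → f x1 x2 = 0) ∧
      (∀ x1 ≤ (0 : ℝ), ∀ x2 : ℝ, k ≤ x2 → x2 ≤ νs x1 →
        f x1 x2 = x2 - k - k * Real.log (x2 / k)) ∧
      (∀ x1 ≤ (0 : ℝ), ∀ x2 : ℝ, νs x1 ≤ x2 → f x1 x2 = GG b k x2 (tau x1 x2)) ∧
      (∀ x1 ≤ (0 : ℝ), ∀ x2 : ℝ, 0 ≤ x2 →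
        HasDerivWithinAt (fun t => f t x2) (f1 x1 x2) (Set.Iic 0) x1 ∧
          HasDerivWithinAt (fun t => f x1 t) (f2 x1 x2) (Set.Ici 0) x2) ∧
      (∀ x2 : ℝ, 0 ≤ x2 → ∀ a ≤ (0 : ℝ), ∀ b ≤ (0 : ℝ),
        PInt (fun u => f11 u x2) (fun u => f1 u x2) a b) ∧
      (∀ x1 ≤ (0 : ℝ), ∀ a b : ℝ, 0 ≤ a → 0 ≤ b →
        PInt (fun u => f12 x1 u) (fun u => f1 x1 u) a b) ∧
      (∀ x1 ≤ (0 : ℝ), ∀ a b : ℝ, 0 ≤ a → 0 ≤ b →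
        PInt (fun u => f22 x1 u) (fun u => f2 x1 u) a b) ∧
      (∀ x1 ≤ (0 : ℝ), ∀ x2 : ℝ, k ≤ x2 → x2 ≤ νs x1 →
        f1 x1 x2 = 0 ∧ f2 x1 x2 = 1 - k / x2 ∧ f22 x1 x2 = 1 / x2 ^ 2 * k) ∧
      (∀ x1 ≤ (0 : ℝ), ∀ x2 : ℝ, νs x1 ≤ x2 →
        f1 x1 x2 = GG1 b k x2 (tau x1 x2) ∧ f2 x1 x2 = GG2 b k x2 (tau x1 x2)) := by
  classical
  have hk : 0 < k := hb.trans hbk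
  have hkb : 0 < k - b := sub_pos.2 hbk
  have hkν : ∀ x1 ≤ (0 : ℝ), k ≤ νs x1 := by
    intro x1 h1
    rw [(hν x1 h1).2.1]
    have := Real.one_le_exp (hν x1 h1).1
    nlinarith
  have hτν : ∀ x1 ≤ (0 : ℝ), ∀ x2, νs x1 ≤ x2 → k * Real.exp (tau x1 x2) ≤ νs x1 := by
    intro x1 h1 x2 h2
    rw [(hν x1 h1).2.1]
    have := (hτ x1 h1 x2 h2).2.1
    gcongr
  have hτx : ∀ x1 ≤ (0 : ℝ), ∀ x2, νs x1 ≤ x2 → k * Real.exp (tau x1 x2) ≤ x2 :=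
    fun x1 h1 x2 h2 => (hτν x1 h1 x2 h2).trans h2
  -- on the curve
  have hcurve : ∀ x1 ≤ (0 : ℝ), tau x1 (νs x1) = eta x1 := by
    intro x1 h1
    have h3 := hτ x1 h1 _ le_rfl
    obtain ⟨h4, h5, h6⟩ := hν x1 h1
    apply key_eq hb hbk (hkν x1 h1) (hτx x1 h1 _ le_rfl) h5.ge
    rw [h3.2.2]
    conv_rhs => rw [h5]
    linarith
  have hexp : ∀ x1 ≤ (0 : ℝ), νs x1 * Real.exp (-tau x1 (νs x1)) = k := by
    intro x1 h1
    rw [hcurve x1 h1, (hν x1 h1).2.1, mul_assoc, ← Real.exp_add]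
    simp
  have hlog : ∀ x1 ≤ (0 : ℝ), Real.log (νs x1 / k) = eta x1 := by
    intro x1 h1
    rw [(hν x1 h1).2.1, mul_div_cancel_left₀ _ hk.ne', Real.log_exp]
  -- definitions
  let f : ℝ → ℝ → ℝ := fun x1 x2 => if νs x1 ≤ x2 then GG b k x2 (tau x1 x2) else
    if k ≤ x2 then x2 - k - k * Real.log (x2 / k) else 0
  let f1 : ℝ → ℝ → ℝ := fun x1 x2 => if νs x1 ≤ x2 then GG1 b k x2 (tau x1 x2) else 0
  let f2 : ℝ → ℝ → ℝ := fun x1 x2 => if νs x1 ≤ x2 then GG2 b k x2 (tau x1 x2) else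
    if k ≤ x2 then 1 - k / x2 else 0
  let f22 : ℝ → ℝ → ℝ := fun x1 x2 => if k ≤ x2 ∧ x2 ≤ νs x1 then 1 / x2 ^ 2 * k else
    deriv (fun t => f2 x1 t) x2
  have hup : ∀ x1 x2, νs x1 ≤ x2 → f x1 x2 = GG b k x2 (tau x1 x2) ∧
      f1 x1 x2 = GG1 b k x2 (tau x1 x2) ∧ f2 x1 x2 = GG2 b k x2 (tau x1 x2) := by
    intro x1 x2 h
    simp [f, f1, f2, h]
  have hmid : ∀ x1 ≤ (0 : ℝ), ∀ x2 : ℝ, k ≤ x2 → x2 ≤ νs x1 →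
      f x1 x2 = x2 - k - k * Real.log (x2 / k) ∧ f1 x1 x2 = 0 ∧ f2 x1 x2 = 1 - k / x2 := by
    intro x1 h1 x2 h2 h3
    rcases h3.lt_or_eq with h | h
    · simp [f, f1, f2, not_le.2 h, h2]
    · obtain ⟨e1, e2, e3⟩ := hup x1 x2 h.ge
      rw [e1, e2, e3]
      have h7 : x2 * Real.exp (-tau x1 x2) = k := by rw [h]; exact hexp x1 h1
      have h8 : tau x1 x2 = Real.log (x2 / k) := by rw [h, hcurve x1 h1, hlog x1 h1]
      simp only [GG, GG1, GG2]
      refine ⟨?_, ?_, ?_⟩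
      · rw [mul_sub, h7, h8]; ring
      · rw [h7]; ring
      · rw [h7]; ring
  have hlow : ∀ x1 ≤ (0 : ℝ), ∀ x2 : ℝ, x2 ≤ k →
      f x1 x2 = 0 ∧ f1 x1 x2 = 0 ∧ f2 x1 x2 = 0 := by
    intro x1 h1 x2 h2
    rcases h2.lt_or_eq with h | h
    · have := not_le.2 (h.trans_le (hkν x1 h1))
      simp [f, f1, f2, this, not_le.2 h]
    · obtain ⟨e1, e2, e3⟩ := hmid x1 h1 x2 h.ge (h2.trans (hkν x1 h1))
      rw [e1, e2, e3, h]
      simp [hk.ne']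
  -- comparison
  have hcmp : ∀ x1 ≤ (0 : ℝ), ∀ x2, k ≤ x2 →
      ((νs x1 ≤ x2 ↔ b * Real.exp (Real.log (x2 / k)) - b - Real.log (x2 / k) * x2 ≤ x1) ∧
      (x2 ≤ νs x1 ↔ x1 ≤ b * Real.exp (Real.log (x2 / k)) - b - Real.log (x2 / k) * x2)) := by
    intro x1 h1 x2 h2
    obtain ⟨h4, h5, h6⟩ := hν x1 h1
    have hL : 0 ≤ Real.log (x2 / k) := Real.log_nonneg (by rwa [le_div_iff₀ hk, one_mul])
    have hx : x2 = k * Real.exp (Real.log (x2 / k)) := by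
      rw [Real.exp_log (div_pos (hk.trans_le h2) hk)]; field_simp
    generalize Real.log (x2 / k) = L at hL hx
    have han := (h_anti hb hbk)
    have a1 := han.le_iff_ge (a := L) (b := eta x1) hL h4
    have a2 := han.le_iff_ge (a := eta x1) (b := L) h4 hL
    beta_reduce at a1 a2
    have c1 : νs x1 ≤ x2 ↔ eta x1 ≤ L := by
      rw [h5, hx, mul_le_mul_iff_right₀ hk, Real.exp_le_exp]
    have c2 : x2 ≤ νs x1 ↔ L ≤ eta x1 := by
      rw [h5, hx, mul_le_mul_iff_right₀ hk, Real.exp_le_exp]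
    rw [c1, c2, ← a1, ← a2, hx]
    constructor <;> constructor <;> intro h <;> linarith
  -- Lipschitz bounds
  have hlip1 : ∀ y, k ≤ y → ∀ s ≤ (0 : ℝ), νs s ≤ y → ∀ t ≤ (0 : ℝ), νs t ≤ y →
      |tau s y - tau t y| ≤ 1 / (k - b) * |s - t| := by
    intro y hy s hs hs' t ht ht'
    have := key_s10 hb hbk hy (hτx s hs y hs') (hτx t ht y ht')
    rw [(hτ s hs y hs').2.2, (hτ t ht y ht').2.2, add_sub_add_right_eq_sub] at this
    rw [one_div, inv_mul_eq_div, le_div_iff₀ hkb]; linarith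
  have hlip2 : ∀ x ≤ (0 : ℝ), ∀ y, νs x ≤ y → ∀ z, νs x ≤ z →
      |tau x y - tau x z| ≤ eta x / (k - b) * |y - z| := by
    intro x hx y hy z hz
    have := key_s10 hb hbk ((hkν x hx).trans hy) (hτx x hx y hy) ((hτν x hx z hz).trans hy)
    have e1 := (hτ x hx y hy).2.2
    obtain ⟨e2, e3, e4⟩ := (hτ x hx z hz)
    have e : (b * Real.exp (tau x y) - y * tau x y) - (b * Real.exp (tau x z) - y * tau x z)
      = tau x z * (y - z) := by linarith
    rw [e, abs_mul, abs_of_nonneg e2] at this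
    rw [div_mul_eq_mul_div, le_div_iff₀ hkb]
    nlinarith [abs_nonneg (y - z), mul_le_mul_of_nonneg_right e3 (abs_nonneg (y - z))]
  refine ⟨f, f1, f2, fun x1 x2 => deriv (fun t => f1 t x2) x1,
    fun x1 x2 => deriv (fun t => f1 x1 t) x2, f22,
    fun x1 h1 x2 _ h2 => (hlow x1 h1 x2 h2).1, fun x1 h1 x2 h2 h3 => (hmid x1 h1 x2 h2 h3).1,
    fun x1 h1 x2 h2 => (hup x1 x2 h2).1, ?_, ?_, ?_, ?_, ?_,
    fun x1 h1 x2 h2 => (hup x1 x2 h2).2⟩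
  · intro x1 h1 x2 h2
    constructor
    · rcases le_total x2 k with hx | hx
      · rw [(hlow x1 h1 x2 hx).2.1]
        exact (hasDerivWithinAt_const x1 _ (0 : ℝ)).congr (fun t ht => (hlow t ht x2 hx).1)
          (hlow x1 h1 x2 hx).1
      · have hc := fun t ht => hcmp t ht x2 hx
        generalize b * Real.exp (Real.log (x2 / k)) - b - Real.log (x2 / k) * x2 = γ at hc
        have hsub : Iic (0 : ℝ) ⊆ (Iic γ ∩ Iic 0) ∪ (Icc γ 0) := by
          intro t ht
          rcases le_total t γ with h | h
          · exact Or.inl ⟨h, ht⟩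
          · exact Or.inr ⟨h, ht⟩
        refine (glue (isClosed_Iic.inter isClosed_Iic) isClosed_Icc ?_ ?_).mono hsub
        · rintro ⟨ha, -⟩
          have e := fun t ht hh => hmid t ht x2 hx ((hc t ht).2.2 hh)
          rw [(e x1 h1 ha).2.1]
          exact (hasDerivWithinAt_const x1 _ _).congr (fun t ht => (e t ht.2 ht.1).1)
            (e x1 h1 ha).1
        · rintro ⟨ha, -⟩
          have e := fun t ht hh => hup t x2 ((hc t ht).1.2 hh)
          rw [(e x1 h1 ha).2.1]
          have hTx := hτx x1 h1 x2 ((hc x1 h1).1.2 ha)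
          have hne : b * Real.exp (tau x1 x2) - x2 * 1 ≠ 0 := by
            nlinarith [Real.exp_pos (tau x1 x2)]
          have hT : HasDerivWithinAt (fun t => tau t x2)
              (1 / (b * Real.exp (tau x1 x2) - x2 * 1)) (Icc γ 0) x1 := by
            refine inv_deriv (T := fun t => tau t x2) (m := fun _ => 1)
              (φ := fun s => b * Real.exp s - x2 * s) (c := x1 + b) ⟨ha, h1⟩ ?_
              continuousWithinAt_const ?_ hne ?_
            · exact cw_of_lip ⟨ha, h1⟩ fun s hs t ht => hlip1 x2 hx s hs.2 ((hc s hs.2).1.2 hs.1)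
                t ht.2 ((hc t ht.2).1.2 ht.1)
            · exact ((Real.hasDerivAt_exp _).const_mul b).sub ((hasDerivAt_id _).const_mul x2)
            · intro s hs
              rw [(hτ s hs.2 x2 ((hc s hs.2).1.2 hs.1)).2.2]; ring
          have hG := GG_deriv (b := b) (k := k) (hasDerivWithinAt_const x1 (Icc γ 0) x2) hT
          refine (hG.congr_deriv ?_).congr (fun t ht => (e t ht.2 ht.1).1) (e x1 h1 ha).1
          simp only [GG1]
          rw [Real.exp_neg]
          have := Real.exp_pos (tau x1 x2)
          generalize Real.exp (tau x1 x2) = E at this hTx hne ⊢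
          rw [mul_one] at hne ⊢
          exact alg1 hb.ne' this.ne' hne
    · have hsub : Ici (0 : ℝ) ⊆ (Iic k ∪ Icc k (νs x1)) ∪ Ici (νs x1) := by
        intro t _
        rcases le_total t k with h | h
        · exact Or.inl (Or.inl h)
        · rcases le_total t (νs x1) with h' | h'
          · exact Or.inl (Or.inr ⟨h, h'⟩)
          · exact Or.inr h'
      refine (glue (isClosed_Iic.union isClosed_Icc) isClosed_Ici (fun _ =>
        glue isClosed_Iic isClosed_Icc ?_ ?_) ?_).mono hsub
      · intro hx
        rw [(hlow x1 h1 x2 hx).2.2]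
        exact (hasDerivWithinAt_const x2 _ (0 : ℝ)).congr (fun t ht => (hlow x1 h1 t ht).1)
          (hlow x1 h1 x2 hx).1
      · rintro ⟨ha, ha'⟩
        have e := fun t hh hh' => hmid x1 h1 t hh hh'
        rw [(e x2 ha ha').2.2]
        have hx0 : 0 < x2 := hk.trans_le ha
        have : HasDerivAt (fun t => t - k - k * Real.log (t / k))
            (1 - k * (1 / k / (x2 / k))) x2 :=
          ((hasDerivAt_id x2).sub_const k).sub
            ((((hasDerivAt_id x2).div_const k).log (by simp; exact ⟨hx0.ne', hk.ne'⟩)).const_mul k)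
        refine (this.hasDerivWithinAt.congr_deriv ?_).congr
          (fun t ht => (e t ht.1 ht.2).1) (e x2 ha ha').1
        field_simp
      · intro ha
        have ha : νs x1 ≤ x2 := ha
        have e := fun t hh => hup x1 t hh
        rw [(e x2 ha).2.2]
        have hTx := hτx x1 h1 x2 ha
        have hx : k ≤ x2 := (hkν x1 h1).trans ha
        have hx0 : 0 < x2 := hk.trans_le hx
        have hne : b * Real.exp (tau x1 x2) - x2 * 1 ≠ 0 := by
          nlinarith [Real.exp_pos (tau x1 x2)]
        have hcw : ContinuousWithinAt (fun t => tau x1 t) (Ici (νs x1)) x2 :=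
          cw_of_lip ha fun s hs t ht => hlip2 x1 h1 s hs t ht
        have hT : HasDerivWithinAt (fun t => tau x1 t)
            (tau x1 x2 / (b * Real.exp (tau x1 x2) - x2 * 1)) (Ici (νs x1)) x2 := by
          refine inv_deriv (T := fun t => tau x1 t) (m := fun t => tau x1 t)
            (φ := fun s => b * Real.exp s - x2 * s) (c := x1 + b) ha hcw hcw ?_ hne ?_
          · exact ((Real.hasDerivAt_exp _).const_mul b).sub ((hasDerivAt_id _).const_mul x2)
          · intro s hs
            have := (hτ x1 h1 s hs).2.2
            linarith
        have hG := GG_deriv (b := b) (k := k) (hasDerivWithinAt_id x2 (Ici (νs x1))) hT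
        refine (hG.congr_deriv ?_).congr (fun t ht => (e t ht).1) (e x2 ha).1
        simp only [GG2, id]
        rw [Real.exp_neg]
        have := Real.exp_pos (tau x1 x2)
        generalize Real.exp (tau x1 x2) = E at this hTx hne ⊢
        rw [mul_one] at hne ⊢
        exact alg2 hb.ne' this.ne' hx0.ne' hne
  · intro x2 h2
    suffices h : ∀ a ≤ (0 : ℝ), PInt (fun u => deriv (fun t => f1 t x2) u) (fun u => f1 u x2) a 0
      from fun a ha c hc => (h a ha).trans (h c hc).symm
    intro a ha
    rcases le_total x2 k with hx | hx
    · exact PInt.piece ha (ac_const 0 a 0) (fun u hu => (hlow u hu.2 x2 hx).2.1) (fun u _ => rfl)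
    · have hc := fun t ht => hcmp t ht x2 hx
      generalize b * Real.exp (Real.log (x2 / k)) - b - Real.log (x2 / k) * x2 = γ at hc
      have hI : ∀ a ≤ (0 : ℝ), γ ≤ a →
          PInt (fun u => deriv (fun t => f1 t x2) u) (fun u => f1 u x2) a 0 := by
        intro a ha hγ
        have hl : ∀ s ∈ Icc a 0, ∀ t ∈ Icc a 0,
            |tau s x2 - tau t x2| ≤ 1 / (k - b) * |s - t| := fun s hs t ht =>
          hlip1 x2 hx s hs.2 ((hc s hs.2).1.2 (hγ.trans hs.1))
            t ht.2 ((hc t ht.2).1.2 (hγ.trans ht.1))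
        have hE : AbsolutelyContinuousOnInterval (fun t => Real.exp (-tau t x2)) a 0 := by
          refine ac_of_lip ha fun s hs t ht => (exp_neg_lip ?_ ?_).trans (hl s hs t ht)
          · exact (hτ s hs.2 x2 ((hc s hs.2).1.2 (hγ.trans hs.1))).1
          · exact (hτ t ht.2 x2 ((hc t ht.2).1.2 (hγ.trans ht.1))).1
        exact PInt.piece ha (GG1_ac (b := b) (k := k) (T := fun t => tau t x2)
          (ac_const x2 a 0) hE)
          (fun u hu => (hup u x2 ((hc u hu.2).1.2 (hγ.trans hu.1))).2.1) (fun u _ => rfl)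
      have hJ : ∀ a ≤ γ, ∀ c ≤ (0 : ℝ), c ≤ γ → a ≤ c →
          PInt (fun u => deriv (fun t => f1 t x2) u) (fun u => f1 u x2) a c := by
        intro a _ c hc0 hcγ hac
        exact PInt.piece hac (ac_const 0 a c) (fun u hu => (hmid u (hu.2.trans hc0) x2 hx
          ((hc u (hu.2.trans hc0)).2.2 (hu.2.trans hcγ))).2.1) (fun u _ => rfl)
      rcases le_total γ a with h | h
      · exact hI a ha h
      · rcases le_total γ 0 with h0 | h0
        · exact (hJ a h γ h0 le_rfl h).trans (hI γ h0 le_rfl)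
        · exact hJ a h 0 le_rfl h0 ha
  · intro x1 h1
    suffices h : ∀ a, 0 ≤ a →
        PInt (fun u => deriv (fun t => f1 x1 t) u) (fun u => f1 x1 u) 0 a
      from fun a c ha hc => (h a ha).symm.trans (h c hc)
    have hA : ∀ a, 0 ≤ a → a ≤ νs x1 →
        PInt (fun u => deriv (fun t => f1 x1 t) u) (fun u => f1 x1 u) 0 a := by
      intro a ha ha'
      refine PInt.piece ha (ac_const 0 0 a) (fun u hu => ?_) (fun u _ => rfl)
      rcases le_total u k with h | h
      · exact (hlow x1 h1 u h).2.1
      · exact (hmid x1 h1 u h (hu.2.trans ha')).2.1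
    intro a ha
    rcases le_total a (νs x1) with h | h
    · exact hA a ha h
    · refine (hA (νs x1) (hk.le.trans (hkν x1 h1)) le_rfl).trans ?_
      have hE : AbsolutelyContinuousOnInterval (fun t => Real.exp (-tau x1 t)) (νs x1) a :=
        ac_of_lip h fun s hs t ht => (exp_neg_lip (hτ x1 h1 s hs.1).1 (hτ x1 h1 t ht.1).1).trans
          (hlip2 x1 h1 s hs.1 t ht.1)
      exact PInt.piece h (GG1_ac (b := b) (k := k) (T := fun t => tau x1 t)
          (ac_id _ a) hE)
          (fun u hu => (hup x1 u hu.1).2.1) (fun u _ => rfl)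
  · intro x1 h1
    have hν0 := hkν x1 h1
    suffices h : ∀ a, 0 ≤ a → PInt (fun u => f22 x1 u) (fun u => f2 x1 u) 0 a
      from fun a c ha hc => (h a ha).symm.trans (h c hc)
    have hA : ∀ a, 0 ≤ a → a ≤ k → PInt (fun u => f22 x1 u) (fun u => f2 x1 u) 0 a := by
      intro a ha ha'
      refine PInt.piece ha (ac_const 0 0 a) (fun u hu => (hlow x1 h1 u (hu.2.trans ha')).2.2)
        (fun u hu => ?_)
      simp only [f22]
      rw [if_neg]
      exact fun h => absurd (hu.2.trans_le ha') (not_lt.2 h.1)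
    have hB : ∀ a, k ≤ a → a ≤ νs x1 → PInt (fun u => f22 x1 u) (fun u => f2 x1 u) k a := by
      intro a ha ha'
      refine PInt.piece (F0 := fun u => 1 - k * (1 / u)) ha
        ((ac_const 1 k a).fun_sub ((ac_inv hk ha).const_mul k))
        (fun u hu => ?_) (fun u hu => ?_)
      · rw [(hmid x1 h1 u hu.1 (hu.2.trans ha')).2.2]; ring
      · simp only [f22]
        rw [if_pos ⟨hu.1.le, hu.2.le.trans ha'⟩]
        have hu0 : u ≠ 0 := (hk.trans hu.1).ne'
        have hd : HasDerivAt (fun t => 1 - k * t⁻¹) (-(k * (-(u ^ 2)⁻¹))) u :=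
          ((hasDerivAt_inv hu0).const_mul k).const_sub 1
        have he : (fun t => f2 x1 t) =ᶠ[𝓝 u] (fun t => 1 - k * t⁻¹) := by
          filter_upwards [Icc_mem_nhds hu.1 hu.2] with v hv
          rw [(hmid x1 h1 v hv.1 (hv.2.trans ha')).2.2]; ring
        rw [he.deriv_eq, hd.deriv]; ring
    intro a ha
    rcases le_total a k with h | h
    · exact hA a ha h
    · refine (hA k hk.le le_rfl).trans ?_
      rcases le_total a (νs x1) with h' | h'
      · exact hB a h h'
      · refine (hB (νs x1) hν0 le_rfl).trans ?_
        have hT : AbsolutelyContinuousOnInterval (fun t => tau x1 t) (νs x1) a :=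
          ac_of_lip h' fun s hs t ht => hlip2 x1 h1 s hs.1 t ht.1
        have hE : AbsolutelyContinuousOnInterval (fun t => Real.exp (-tau x1 t)) (νs x1) a :=
          ac_of_lip h' fun s hs t ht =>
            (exp_neg_lip (hτ x1 h1 s hs.1).1 (hτ x1 h1 t ht.1).1).trans
            (hlip2 x1 h1 s hs.1 t ht.1)
        refine PInt.piece h' (GG2_ac (b := b) (k := k) (hk.trans_le hν0) h' hT hE)
          (fun u hu => (hup x1 u hu.1).2.2) (fun u hu => ?_)
        simp only [f22]
        rw [if_neg]
        exact fun h => absurd hu.1 (not_lt.2 h.2)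
  · intro x1 h1 x2 h2 h3
    refine ⟨(hmid x1 h1 x2 h2 h3).2.1, (hmid x1 h1 x2 h2 h3).2.2, ?_⟩
    simp only [f22]
    rw [if_pos ⟨h2, h3⟩]

end

/-- Lemma `derivs`.  Fix `κ > β`, let `ν*` parametrize `Γ^{(κ)}` and let
`τ(x)` be the smallest nonnegative solution of the hitting-time equation wherever it
exists (hypothesis `htau`).  There exists a function `f` on `Ω` agreeing with the three
prescribed formulas on the three (overlapping) subdomains — in particular the pieces
agree on the overlaps, so the piecewise definition is well posed — which has absolutely
continuous first-order partial derivatives `f1, f2` (with second-order weak derivatives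
`f11, f12, f22` given by the integral representations), and whose derivatives satisfy
the stated formulas on `{x ≤ Γ^{(κ)}, x₂ ≥ κ/√n}` and on `{x ≥ Γ^{(κ)}}`. -/
theorem stmt10 (n : ℕ) (hn : 1 ≤ n) (β κ : ℝ) (hβ : 0 < β) (hκ : β < κ)
    (νs : ℝ → ℝ)
    (hνs : ∀ x1 ≤ (0 : ℝ), ∃ η : ℝ, GammaSol n β κ x1 (νs x1) η)
    (tau : ℝ → ℝ → ℝ)
    (htau : ∀ x1 x2 η : ℝ, 0 ≤ η → HitEq n β x1 x2 η →
      (∀ η' : ℝ, 0 ≤ η' → HitEq n β x1 x2 η' → η ≤ η') → tau x1 x2 = η) :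
    ∃ f f1 f2 f11 f12 f22 : ℝ → ℝ → ℝ,
      -- the three defining pieces (their simultaneous validity encodes that the pieces
      -- agree wherever the regions overlap)
      (∀ x1 ≤ (0 : ℝ), ∀ x2 : ℝ, 0 ≤ x2 → x2 ≤ κ / Real.sqrt n → f x1 x2 = 0) ∧
      (∀ x1 ≤ (0 : ℝ), ∀ x2 : ℝ, κ / Real.sqrt n ≤ x2 → x2 ≤ νs x1 →
        f x1 x2 = x2 - κ / Real.sqrt n -
          κ / Real.sqrt n * Real.log (Real.sqrt n * x2 / κ)) ∧
      (∀ x1 ≤ (0 : ℝ), ∀ x2 : ℝ, νs x1 ≤ x2 →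
        f x1 x2 = x2 * (1 - Real.exp (-tau x1 x2)) -
          κ / Real.sqrt n * tau x1 x2 +
          1 / 2 * (Real.sqrt n / β) *
            (x2 * Real.exp (-tau x1 x2) - κ / Real.sqrt n) ^ 2) ∧
      -- f1, f2 are the first-order (one-sided) partial derivatives of f on Ω
      (∀ x1 ≤ (0 : ℝ), ∀ x2 : ℝ, 0 ≤ x2 →
        HasDerivWithinAt (fun t => f t x2) (f1 x1 x2) (Set.Iic 0) x1 ∧
          HasDerivWithinAt (fun t => f x1 t) (f2 x1 x2) (Set.Ici 0) x2) ∧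
      -- absolute continuity of the first-order partial derivatives
      (∀ x2 : ℝ, 0 ≤ x2 → ∀ a ≤ (0 : ℝ), ∀ b ≤ (0 : ℝ),
        IntervalIntegrable (fun u => f11 u x2) volume a b ∧
          f1 b x2 - f1 a x2 = ∫ u in a..b, f11 u x2) ∧
      (∀ x1 ≤ (0 : ℝ), ∀ a b : ℝ, 0 ≤ a → 0 ≤ b →
        IntervalIntegrable (fun u => f12 x1 u) volume a b ∧
          f1 x1 b - f1 x1 a = ∫ u in a..b, f12 x1 u) ∧
      (∀ x1 ≤ (0 : ℝ), ∀ a b : ℝ, 0 ≤ a → 0 ≤ b →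
        IntervalIntegrable (fun u => f22 x1 u) volume a b ∧
          f2 x1 b - f2 x1 a = ∫ u in a..b, f22 x1 u) ∧
      -- derivative formulas when x ≤ Γ^{(κ)} and x₂ ≥ κ/√n
      (∀ x1 ≤ (0 : ℝ), ∀ x2 : ℝ, κ / Real.sqrt n ≤ x2 → x2 ≤ νs x1 →
        f1 x1 x2 = 0 ∧
          f2 x1 x2 = 1 - κ / (x2 * Real.sqrt n) ∧
          f22 x1 x2 = 1 / x2 ^ 2 * (κ / Real.sqrt n)) ∧
      -- derivative formulas when x ≥ Γ^{(κ)}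
      (∀ x1 ≤ (0 : ℝ), ∀ x2 : ℝ, νs x1 ≤ x2 →
        f1 x1 x2 = Real.sqrt n / β * Real.exp (-tau x1 x2) *
            (x2 * Real.exp (-tau x1 x2) - κ / Real.sqrt n) ∧
          f2 x1 x2 = 1 - 1 / x2 * (κ / Real.sqrt n) +
            Real.sqrt n / β * (x2 * Real.exp (-tau x1 x2) - κ / Real.sqrt n) *
              ((x2 * Real.exp (-tau x1 x2) - β / Real.sqrt n) / x2 +
                tau x1 x2 * Real.exp (-tau x1 x2))) := by
  have hs : 0 < Real.sqrt n := Real.sqrt_pos.2 (by exact_mod_cast hn)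
  have hb : 0 < β / Real.sqrt n := div_pos hβ hs
  have hbk : β / Real.sqrt n < κ / Real.sqrt n := div_lt_div_of_pos_right hκ hs
  have hκ0 : 0 < κ := hβ.trans hκ
  have e1 : Real.sqrt n / β = 1 / (β / Real.sqrt n) := by rw [one_div_div]
  have e2 : ∀ x : ℝ, Real.sqrt n * x / κ = x / (κ / Real.sqrt n) := by
    intro x; field_simp
  have e3 : ∀ x : ℝ, κ / (x * Real.sqrt n) = κ / Real.sqrt n / x := by
    intro x; rw [div_div, mul_comm]
  simp only [e1, e2, e3]
  simp only [GammaSol] at hνs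
  simp only [HitEq] at htau
  generalize β / Real.sqrt n = b at *
  generalize κ / Real.sqrt n = k at *
  have hk : 0 < k := hb.trans hbk
  choose! eta heta using hνs
  have hν : ∀ x1 ≤ (0 : ℝ), 0 ≤ eta x1 ∧ νs x1 = k * Real.exp (eta x1) ∧
      b * Real.exp (eta x1) - b - eta x1 * (k * Real.exp (eta x1)) = x1 := by
    intro x1 h1
    obtain ⟨a1, a2, a3, a4⟩ := heta x1 h1
    have hE := Real.exp_pos (eta x1)
    rw [Real.exp_neg] at a3 a4
    have a5 : νs x1 = k * Real.exp (eta x1) := by field_simp at a4; linarith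
    refine ⟨a2, a5, ?_⟩
    rw [a5] at a3
    field_simp at a3
    linarith
  have hτ : ∀ x1 ≤ (0 : ℝ), ∀ x2, νs x1 ≤ x2 → 0 ≤ tau x1 x2 ∧ tau x1 x2 ≤ eta x1 ∧
      b * Real.exp (tau x1 x2) - x2 * tau x1 x2 = x1 + b := by
    intro x1 h1 x2 h2
    obtain ⟨a1, a2, a3⟩ := hν x1 h1
    have hH : ∀ s : ℝ, b - (x1 + b) * Real.exp (-s) - s * x2 * Real.exp (-s) = 0 ↔
        b * Real.exp s - x2 * s = x1 + b := by
      intro s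
      have hE := Real.exp_pos s
      rw [Real.exp_neg]
      constructor
      · intro h
        field_simp at h
        linarith
      · intro h
        field_simp
        linarith
    have hc : ContinuousOn (fun s : ℝ => b * Real.exp s - x2 * s) (Set.Icc 0 (eta x1)) := by
      fun_prop
    have hkν : k ≤ νs x1 := (heta x1 h1).1
    obtain ⟨t, ht, hte⟩ := intermediate_value_Icc' a1 hc (show x1 + b ∈ _ by
      constructor
      · rw [a2] at h2
        have := mul_le_mul_of_nonneg_left h2 a1
        linarith
      · simp; linarith)
    have hx : ∀ s ≤ t, k * Real.exp s ≤ x2 := by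
      intro s hs
      refine le_trans ?_ h2
      rw [a2]
      have := hs.trans ht.2
      gcongr
    have : tau x1 x2 = t := by
      apply htau x1 x2 t ht.1 ((hH t).2 hte)
      intro s hs0 hs
      by_contra hlt
      push Not at hlt
      have := key_eq hb hbk (hkν.trans h2) (hx s hlt.le) (hx t le_rfl)
        (((hH s).1 hs).trans hte.symm)
      exact hlt.ne this
    rw [this]
    exact ⟨ht.1, ht.2, hte⟩
  exact mainAbs hb hbk νs eta tau hν hτ
end
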